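/- arXiv:2212.10871 — 2 statements merged into one kernel-verified Lean document; each statement's English description precedes it below -/
import Mathlib

section
/- Let (p_k)_{k≥0} be a critical offspring distribution with span 1, variance σ² ∈ (0,∞), and ∑_{k≥0} k^{2+δ} p_k < ∞ for some δ ∈ (0,1]. Then the tree-size probabilities satisfy q_n = (2πσ²)^{-1/2} n^{-3/2} + O(n^{-3/2-δ/2}) as n → ∞. -/
open Filter Asymptotics

/-!
The functional equation holds at real points, and both sides are power series with absolutely
summable coefficients, so it is an identity `Q = X * P.subst Q` of formal power series. Lagrange
inversion turns it into `n * q n = coeff n (X * P ^ n)`, which is the probability that a random walk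
with centered steps `ξ - 1`, where `ξ` has law `p`, is at `-1` at time `n`; this is a local limit
problem.

By Fourier inversion this probability is `(2π)⁻¹ ∫ ψ θ ^ n * exp (I * θ)` over `[-π, π]`, with `ψ`
the characteristic function of `ξ - 1`. The moment of order `2 + δ` gives
`ψ θ = 1 - s / 2 * θ ^ 2 + O(|θ| ^ (2 + δ))` with `s` the variance, and span `1` gives `‖ψ θ‖ < 1`
off `0`; by compactness `‖ψ θ‖ ≤ exp (-c * θ ^ 2)` on `[-π, π]` for some `c > 0`. Telescoping
`ψ ^ n - exp (-(s / 2) * θ ^ 2) ^ n` then bounds the error of the Gaussian approximation by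
`∫ (|θ| + n * |θ| ^ (2 + δ)) * exp (-c * n * θ ^ 2)`, up to a constant factor, and this is
`O(n ^ (-1 / 2 - δ / 2))` by scaling.
-/

open scoped PowerSeries Real Topology

section LagrangeInversion

open PowerSeries

variable {R : Type*} [CommRing R]

theorem coeff_X_mul_derivative (F : R⟦X⟧) (n : ℕ) :
    coeff n (X * d⁄dX R F) = n * coeff n F := by
  cases n with
  | zero => simp
  | succ n =>
    rw [coeff_succ_X_mul, coeff_derivative, mul_comm]
    push_cast
    rfl

theorem constantCoeff_subst_eq {Q : R⟦X⟧} (hQ : constantCoeff Q = 0) (F : R⟦X⟧) :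
    constantCoeff (F.subst Q) = constantCoeff F := by
  have hsubst : HasSubst Q := .of_constantCoeff_zero' hQ
  have h : constantCoeff ((F - C (constantCoeff F)).subst Q) = 0 :=
    constantCoeff_subst_eq_zero hQ _ (by simp)
  rw [subst_sub hsubst, subst_C, map_sub, sub_eq_zero] at h
  exact h.trans (constantCoeff_C _)

theorem lagrange_burmann [IsAddTorsionFree R] {P Q : R⟦X⟧} (hQ : Q = X * P.subst Q)
    (F : R⟦X⟧) (n : ℕ) :
    n * coeff n (F.subst Q) = coeff n (X * d⁄dX R F * P ^ n) := by
  have hQ0 : constantCoeff Q = 0 := by rw [hQ]; simp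
  have hsubst : HasSubst Q := .of_constantCoeff_zero' hQ0
  induction n generalizing F with
  | zero => simp
  | succ n ih =>
    -- If `F = X * G + c` then `F(Q) = Q * G(Q) + c = X * (P * G)(Q) + c`, so that the inductive
    -- hypothesis applies to `P * G`.
    obtain ⟨G, c, rfl⟩ : ∃ (G : R⟦X⟧) (c : R), F = X * G + C c :=
      ⟨_, _, eq_X_mul_shift_add_const F⟩
    have hF : coeff (n + 1) ((X * G + C c).subst Q) = coeff n ((P * G).subst Q) := by
      have : (X * G + C c).subst Q = X * (P * G).subst Q + (C c).subst Q := by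
        rw [subst_add hsubst, subst_mul hsubst, subst_X hsubst, subst_mul hsubst, ← mul_assoc,
          ← hQ]
      rw [this, map_add, coeff_succ_X_mul, subst_C]
      exact add_eq_left.mpr (coeff_C_of_ne_zero n.succ_ne_zero)
    have hdF : X * d⁄dX R (X * G + C c) * P ^ (n + 1) =
        X * (P ^ (n + 1) * G + X * d⁄dX R G * P ^ (n + 1)) := by
      simp only [map_add, Derivation.leibniz, derivative_X, derivative_C, smul_eq_mul]
      ring
    have hdPG : C (n + 1 : R) * (X * d⁄dX R (P * G) * P ^ n) =
        X * d⁄dX R (P ^ (n + 1) * G) + C (n : R) * (X * d⁄dX R G * P ^ (n + 1)) := by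
      simp only [Derivation.leibniz, derivative_pow, smul_eq_mul, Nat.add_sub_cancel, map_add,
        map_natCast, map_one]
      push_cast
      ring
    rw [hF, hdF, coeff_succ_X_mul]
    rcases eq_or_ne n 0 with rfl | hn
    · simp [constantCoeff_subst_eq hQ0]
    · refine nsmul_right_injective hn ?_
      have h := congrArg (coeff n) hdPG
      rw [coeff_C_mul, map_add, coeff_C_mul, coeff_X_mul_derivative, ← ih] at h
      simp only [nsmul_eq_mul, map_add, Nat.cast_succ]
      linear_combination h

theorem lagrange_inversion [IsAddTorsionFree R] {P Q : R⟦X⟧} (hQ : Q = X * P.subst Q) (n : ℕ) :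
    n * coeff n Q = coeff n (X * P ^ n) := by
  have hsubst : HasSubst Q := .of_constantCoeff_zero' (by rw [hQ]; simp)
  simpa only [subst_X hsubst, derivative_X, mul_one] using lagrange_burmann hQ X n

end LagrangeInversion

section WienerAlgebra

open PowerSeries

variable {𝕜 : Type*} [NontriviallyNormedField 𝕜] {A B P Q : 𝕜⟦X⟧} {z : 𝕜}

variable (𝕜) in
/-- The (analytic) Wiener algebra: power series with absolutely summable coefficients. -/
def wienerAlgebra : Subalgebra 𝕜 𝕜⟦X⟧ where
  carrier := {A | Summable fun n => ‖coeff n A‖}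
  add_mem' hA hB := (hA.add hB).of_nonneg_of_le (fun _ => norm_nonneg _) fun n => by
    rw [map_add]
    exact norm_add_le _ _
  mul_mem' {A B} hA hB := by
    simpa only [Set.mem_ofPred_eq, coeff_mul] using
      summable_norm_sum_mul_antidiagonal_of_summable_norm hA hB
  algebraMap_mem' r := summable_of_ne_finset_zero (s := {0}) fun n hn => by
    rw [PowerSeries.algebraMap_apply, coeff_C_of_ne_zero (by simpa using hn), norm_zero]

theorem mem_wienerAlgebra : A ∈ wienerAlgebra 𝕜 ↔ Summable fun n => ‖coeff n A‖ :=
  Iff.rfl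

theorem X_mem_wienerAlgebra : (X : 𝕜⟦X⟧) ∈ wienerAlgebra 𝕜 :=
  summable_of_ne_finset_zero (s := {1}) fun n hn => by
    rw [coeff_X, if_neg (by simpa using hn), norm_zero]

/-- The value at `z` of a power series; it is `0` where the series diverges. -/
noncomputable def evalSum (A : 𝕜⟦X⟧) (z : 𝕜) : 𝕜 :=
  ∑' n, coeff n A * z ^ n

/-- The `ℓ¹` norm of the coefficients, meaningful on `wienerAlgebra`. -/
noncomputable def wienerNorm (A : 𝕜⟦X⟧) : ℝ :=
  ∑' n, ‖coeff n A‖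

theorem summable_norm_coeff_mul_pow (hA : A ∈ wienerAlgebra 𝕜) (hz : ‖z‖ ≤ 1) :
    Summable fun n => ‖coeff n A * z ^ n‖ := by
  refine Summable.of_nonneg_of_le (fun _ => norm_nonneg _) (fun n => ?_) hA
  rw [norm_mul, norm_pow]
  exact mul_le_of_le_one_right (norm_nonneg _) (pow_le_one₀ (norm_nonneg _) hz)

theorem wienerNorm_mul_le (hA : A ∈ wienerAlgebra 𝕜) (hB : B ∈ wienerAlgebra 𝕜) :
    wienerNorm (A * B) ≤ wienerNorm A * wienerNorm B := by
  have hA' := (mem_wienerAlgebra.mp hA).norm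
  have hB' := (mem_wienerAlgebra.mp hB).norm
  rw [wienerNorm, wienerNorm, wienerNorm,
    tsum_mul_tsum_eq_tsum_sum_antidiagonal_of_summable_norm hA' hB']
  refine (mul_mem hA hB : A * B ∈ wienerAlgebra 𝕜).tsum_le_tsum (fun n => ?_)
    (summable_norm_sum_mul_antidiagonal_of_summable_norm hA' hB').of_norm
  rw [coeff_mul]
  exact (norm_sum_le _ _).trans_eq (Finset.sum_congr rfl fun _ _ => norm_mul _ _)

theorem wienerNorm_pow_le_one (hA : A ∈ wienerAlgebra 𝕜) (h1 : wienerNorm A ≤ 1) (k : ℕ) :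
    wienerNorm (A ^ k) ≤ 1 := by
  induction k with
  | zero =>
    rw [pow_zero, wienerNorm, tsum_eq_single 0 fun n hn => by simp [coeff_one, hn]]
    simp
  | succ k ih =>
    rw [pow_succ]
    exact (wienerNorm_mul_le (pow_mem hA k) hA).trans
      (mul_le_one₀ ih (tsum_nonneg fun _ => norm_nonneg _) h1)

theorem summable_norm_coeff_mul_coeff_pow (hP : P ∈ wienerAlgebra 𝕜) (hQ : Q ∈ wienerAlgebra 𝕜)
    (hQ1 : wienerNorm Q ≤ 1) :
    Summable fun x : ℕ × ℕ => ‖coeff x.1 P * coeff x.2 (Q ^ x.1)‖ := by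
  rw [summable_prod_of_nonneg fun _ => norm_nonneg _]
  simp only [norm_mul]
  refine ⟨fun k => Summable.mul_left _ (pow_mem hQ k : Q ^ k ∈ wienerAlgebra 𝕜), ?_⟩
  refine Summable.of_nonneg_of_le (fun k => by positivity) (fun k => ?_) hP
  rw [tsum_mul_left]
  exact mul_le_of_le_one_right (norm_nonneg _) (wienerNorm_pow_le_one hQ hQ1 k)

theorem coeff_subst_eq_tsum (hQ0 : constantCoeff Q = 0) (P : 𝕜⟦X⟧) (n : ℕ) :
    coeff n (P.subst Q) = ∑' k, coeff k P * coeff n (Q ^ k) := by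
  have hsubst : HasSubst Q := .of_constantCoeff_zero' hQ0
  rw [coeff_subst' hsubst,
    ← tsum_eq_finsum (L := .unconditional ℕ) (coeff_subst_finite' hsubst P n)]
  rfl

theorem subst_mem_wienerAlgebra (hP : P ∈ wienerAlgebra 𝕜) (hQ : Q ∈ wienerAlgebra 𝕜)
    (hQ0 : constantCoeff Q = 0) (hQ1 : wienerNorm Q ≤ 1) : P.subst Q ∈ wienerAlgebra 𝕜 := by
  have hsum := (summable_norm_coeff_mul_coeff_pow hP hQ hQ1).prod_symm
  refine Summable.of_nonneg_of_le (fun _ => norm_nonneg _) (fun n => ?_) hsum.prod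
  rw [coeff_subst_eq_tsum hQ0]
  exact norm_tsum_le_tsum_norm (hsum.prod_factor n)

theorem evalSum_one (z : 𝕜) : evalSum 1 z = 1 := by
  rw [evalSum, tsum_eq_single 0 fun n hn => by simp [coeff_one, hn]]
  simp

theorem evalSum_X (z : 𝕜) : evalSum X z = z := by
  rw [evalSum, tsum_eq_single 1 fun n hn => by simp [coeff_X, hn]]
  simp

variable [CompleteSpace 𝕜]

theorem evalSum_mul (hA : A ∈ wienerAlgebra 𝕜) (hB : B ∈ wienerAlgebra 𝕜) (hz : ‖z‖ ≤ 1) :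
    evalSum (A * B) z = evalSum A z * evalSum B z := by
  have h := tsum_mul_tsum_eq_tsum_sum_antidiagonal_of_summable_norm
    (f := fun n => coeff n A * z ^ n) (g := fun n => coeff n B * z ^ n)
    (summable_norm_coeff_mul_pow hA hz) (summable_norm_coeff_mul_pow hB hz)
  refine Eq.trans (tsum_congr fun n => ?_) h.symm
  rw [coeff_mul, Finset.sum_mul]
  refine Finset.sum_congr rfl fun x hx => ?_
  rw [← Finset.HasAntidiagonal.mem_antidiagonal.mp hx, pow_add, mul_mul_mul_comm]

theorem evalSum_pow (hA : A ∈ wienerAlgebra 𝕜) (hz : ‖z‖ ≤ 1) (k : ℕ) :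
    evalSum (A ^ k) z = evalSum A z ^ k := by
  induction k with
  | zero => simp only [pow_zero, evalSum_one]
  | succ k ih => rw [pow_succ, pow_succ, evalSum_mul (pow_mem hA k) hA hz, ih]

theorem evalSum_subst (hP : P ∈ wienerAlgebra 𝕜) (hQ : Q ∈ wienerAlgebra 𝕜)
    (hQ0 : constantCoeff Q = 0) (hQ1 : wienerNorm Q ≤ 1) (hz : ‖z‖ ≤ 1) :
    evalSum (P.subst Q) z = evalSum P (evalSum Q z) := by
  have hsum : Summable (Function.uncurry fun k n => coeff k P * coeff n (Q ^ k) * z ^ n) := by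
    refine Summable.of_norm_bounded (summable_norm_coeff_mul_coeff_pow hP hQ hQ1) fun x => ?_
    rw [Function.uncurry, norm_mul, norm_pow]
    exact mul_le_of_le_one_right (norm_nonneg _) (pow_le_one₀ (norm_nonneg _) hz)
  calc evalSum (P.subst Q) z = ∑' n, ∑' k, coeff k P * coeff n (Q ^ k) * z ^ n := by
        simp_rw [evalSum, coeff_subst_eq_tsum hQ0, tsum_mul_right]
    _ = ∑' k, ∑' n, coeff k P * coeff n (Q ^ k) * z ^ n := hsum.tsum_comm
    _ = ∑' k, coeff k P * evalSum (Q ^ k) z := by simp_rw [mul_assoc, tsum_mul_left, evalSum]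
    _ = evalSum P (evalSum Q z) := by simp_rw [evalSum_pow hQ hz]; rfl

theorem hasFPowerSeriesAt_evalSum (hA : A ∈ wienerAlgebra 𝕜) :
    HasFPowerSeriesAt (evalSum A) (FormalMultilinearSeries.ofScalars 𝕜 fun n => coeff n A) 0 := by
  rw [hasFPowerSeriesAt_iff]
  filter_upwards [Metric.ball_mem_nhds (0 : 𝕜) one_pos] with z hz
  have hz1 : ‖z‖ ≤ 1 := (mem_ball_zero_iff.mp hz).le
  simpa [mul_comm, evalSum] using (summable_norm_coeff_mul_pow hA hz1).of_norm.hasSum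

theorem eq_of_frequently_evalSum_eq (hA : A ∈ wienerAlgebra 𝕜) (hB : B ∈ wienerAlgebra 𝕜)
    (h : ∃ᶠ z in 𝓝[≠] 0, evalSum A z = evalSum B z) : A = B := by
  have hA' := hasFPowerSeriesAt_evalSum hA
  have hB' := hasFPowerSeriesAt_evalSum hB
  have hAB := (hA'.analyticAt.frequently_eq_iff_eventually_eq hB'.analyticAt).mp h
  ext n
  simpa using congrArg (·.coeff n) ((hA'.congr hAB).eq_formalMultilinearSeries hB')

theorem eq_X_mul_subst_of_frequently_evalSum_eq (hP : P ∈ wienerAlgebra 𝕜)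
    (hQ : Q ∈ wienerAlgebra 𝕜) (hQ0 : constantCoeff Q = 0) (hQ1 : wienerNorm Q ≤ 1)
    (h : ∃ᶠ z in 𝓝[≠] 0, evalSum Q z = z * evalSum P (evalSum Q z)) : Q = X * P.subst Q := by
  have hPQ := subst_mem_wienerAlgebra hP hQ hQ0 hQ1
  refine eq_of_frequently_evalSum_eq hQ (mul_mem X_mem_wienerAlgebra hPQ) ?_
  have hball : ∀ᶠ z in 𝓝[≠] (0 : 𝕜), z ∈ Metric.ball 0 1 :=
    mem_nhdsWithin_of_mem_nhds (Metric.ball_mem_nhds 0 one_pos)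
  refine (h.and_eventually hball).mono fun z ⟨hz, hz1⟩ => ?_
  replace hz1 : ‖z‖ ≤ 1 := (mem_ball_zero_iff.mp hz1).le
  rw [hz, evalSum_mul X_mem_wienerAlgebra hPQ hz1, evalSum_X, evalSum_subst hP hQ hQ0 hQ1 hz1]

end WienerAlgebra

section FourierInversion

open Complex PowerSeries

theorem integral_exp_I_mul_intCast_mul (k : ℤ) :
    ∫ θ : ℝ in -π..π, exp (I * k * θ) = if k = 0 then 2 * (π : ℂ) else 0 := by
  split_ifs with hk
  · simp only [hk, Int.cast_zero, mul_zero, zero_mul, exp_zero, intervalIntegral.integral_const,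
      real_smul]
    push_cast
    ring
  · have hexp : exp (I * k * π) = exp (I * k * (-π : ℝ)) :=
      exp_eq_exp_iff_exists_int.mpr ⟨k, by push_cast; ring⟩
    rw [integral_exp_mul_complex (mul_ne_zero I_ne_zero (Int.cast_ne_zero.mpr hk)), hexp,
      sub_self, zero_div]

theorem integral_evalSum_exp_mul_exp {A : ℂ⟦X⟧} (hA : A ∈ wienerAlgebra ℂ) (m : ℕ) :
    ∫ θ : ℝ in -π..π, evalSum A (exp (I * θ)) * exp (-(I * m * θ)) = 2 * π * coeff m A := by
  let f (j : ℕ) : C(ℝ, ℂ) :=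
    ⟨fun θ => coeff j A * exp (I * (j - m : ℤ) * θ), by fun_prop⟩
  have hf : Summable fun j => ‖(f j).restrict
      (⟨Set.uIcc (-π) π, isCompact_uIcc⟩ : TopologicalSpace.Compacts ℝ)‖ := by
    refine Summable.of_nonneg_of_le (fun _ => norm_nonneg _) (fun j => ?_) hA
    refine (ContinuousMap.norm_le _ (norm_nonneg _)).mpr fun θ => ?_
    have : I * (j - m : ℤ) * (θ : ℝ) = I * ((j - m : ℤ) * θ : ℝ) := by push_cast; ring
    rw [ContinuousMap.restrict_apply, ContinuousMap.coe_mk, norm_mul, this,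
      norm_exp_I_mul_ofReal, mul_one]
  have hfθ (θ : ℝ) : evalSum A (exp (I * θ)) * exp (-(I * m * θ)) = ∑' j, f j θ := by
    rw [evalSum, ← tsum_mul_right]
    refine tsum_congr fun j => ?_
    rw [mul_assoc, ← exp_nat_mul, ← exp_add, ContinuousMap.coe_mk]
    congr 2
    push_cast
    ring
  simp_rw [hfθ]
  rw [← intervalIntegral.tsum_intervalIntegral_eq_of_summable_norm hf]
  simp only [f, ContinuousMap.coe_mk, intervalIntegral.integral_const_mul,
    integral_exp_I_mul_intCast_mul, sub_eq_zero, Nat.cast_inj]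
  simp [mul_comm]

end FourierInversion

section LaplaceMethod

open MeasureTheory Set

theorem norm_setIntegral_sub_integral_le {α E : Type*} [MeasurableSpace α] {μ : Measure α}
    [NormedAddCommGroup E] [NormedSpace ℝ E] {S : Set α} {f g : α → E} {m : α → ℝ}
    (hS : MeasurableSet S) (hf : IntegrableOn f S μ) (hg : Integrable g μ) (hm : Integrable m μ)
    (hin : ∀ x ∈ S, ‖f x - g x‖ ≤ m x) (hout : ∀ x ∉ S, ‖g x‖ ≤ m x) :
    ‖(∫ x in S, f x ∂μ) - ∫ x, g x ∂μ‖ ≤ ∫ x, m x ∂μ := by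
  rw [← integral_indicator hS, ← integral_sub (hf.integrable_indicator hS) hg]
  refine norm_integral_le_of_norm_le hm (Eventually.of_forall fun x => ?_)
  by_cases hx : x ∈ S
  · rw [indicator_of_mem hx]
    exact hin x hx
  · rw [indicator_of_notMem hx, zero_sub, norm_neg]
    exact hout x hx

theorem integral_abs_rpow_mul_exp_neg_mul_sq {r b : ℝ} (hr : -1 < r) (hb : 0 < b) :
    ∫ x : ℝ, |x| ^ r * Real.exp (-b * x ^ 2) =
      b ^ (-(r + 1) / 2) * Real.Gamma ((r + 1) / 2) := by
  have habs (x : ℝ) :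
      |x| ^ r * Real.exp (-b * x ^ 2) = |x| ^ r * Real.exp (-b * |x| ^ (2 : ℝ)) := by
    rw [Real.rpow_two, sq_abs]
  simp_rw [habs]
  rw [integral_comp_abs (f := fun x => x ^ r * Real.exp (-b * x ^ (2 : ℝ))),
    integral_rpow_mul_exp_neg_mul_rpow two_pos hr hb]
  ring

theorem integrable_abs_rpow_mul_exp_neg_mul_sq {r b : ℝ} (hr : -1 < r) (hb : 0 < b) :
    Integrable fun x : ℝ => |x| ^ r * Real.exp (-b * x ^ 2) := by
  refine .of_integral_ne_zero ?_
  rw [integral_abs_rpow_mul_exp_neg_mul_sq hr hb]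
  have := Real.Gamma_pos_of_pos (show 0 < (r + 1) / 2 by linarith)
  positivity

theorem isBigO_integral_abs_rpow_mul_exp_neg_mul_sq {r b : ℝ} (hr : -1 < r) (hb : 0 < b) :
    (fun n : ℝ => ∫ x : ℝ, |x| ^ r * Real.exp (-(b * n) * x ^ 2)) =O[atTop]
      fun n => n ^ (-(r + 1) / 2) := by
  refine ((isBigO_refl (fun n : ℝ => n ^ (-(r + 1) / 2)) atTop).const_mul_left
    (b ^ (-(r + 1) / 2) * Real.Gamma ((r + 1) / 2))).congr' ?_ .rfl
  filter_upwards [eventually_gt_atTop 0] with n hn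
  rw [integral_abs_rpow_mul_exp_neg_mul_sq hr (mul_pos hb hn), Real.mul_rpow hb.le hn.le]
  ring

theorem norm_pow_sub_pow_le {R : Type*} [SeminormedCommRing R] [NormOneClass R] {x y : R} {ρ : ℝ}
    (hx : ‖x‖ ≤ ρ) (hy : ‖y‖ ≤ ρ) (n : ℕ) : ‖x ^ n - y ^ n‖ ≤ ‖x - y‖ * (n * ρ ^ (n - 1)) := by
  have hρ : 0 ≤ ρ := (norm_nonneg _).trans hx
  have hsum : ‖∑ i ∈ Finset.range n, x ^ i * y ^ (n - 1 - i)‖ ≤ n * ρ ^ (n - 1) := by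
    rw [← nsmul_eq_mul, ← Finset.card_range n, ← Finset.sum_const, Finset.card_range]
    refine norm_sum_le_of_le _ fun i hi => ?_
    have hin : i + (n - 1 - i) = n - 1 := by
      have := Finset.mem_range.mp hi
      omega
    calc ‖x ^ i * y ^ (n - 1 - i)‖ ≤ ‖x‖ ^ i * ‖y‖ ^ (n - 1 - i) :=
          norm_mul_le_of_le (norm_pow_le _ _) (norm_pow_le _ _)
      _ ≤ ρ ^ i * ρ ^ (n - 1 - i) := by gcongr
      _ = ρ ^ (n - 1) := by rw [← pow_add, hin]
  rw [← (Commute.all x y).mul_geom_sum₂ n]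
  exact norm_mul_le_of_le le_rfl hsum

theorem norm_pow_mul_sub_pow_le {R : Type*} [SeminormedCommRing R] [NormOneClass R] {x y w : R}
    {ρ : ℝ} (hρ : 0 < ρ) (hx : ‖x‖ ≤ ρ) (hy : ‖y‖ ≤ ρ) (n : ℕ) :
    ‖x ^ n * w - y ^ n‖ ≤ (‖w - 1‖ + n * (ρ⁻¹ * ‖x - y‖)) * ρ ^ n := by
  have hρn : (n : ℝ) * ρ ^ (n - 1) = n * (ρ⁻¹ * ρ ^ n) := by
    rcases n with _ | n
    · simp
    · rw [Nat.add_sub_cancel, pow_succ', inv_mul_cancel_left₀ hρ.ne']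
  calc ‖x ^ n * w - y ^ n‖ = ‖x ^ n * (w - 1) + (x ^ n - y ^ n)‖ := by ring_nf
    _ ≤ ρ ^ n * ‖w - 1‖ + ‖x - y‖ * (n * ρ ^ (n - 1)) := by
      refine norm_add_le_of_le ((norm_mul_le _ _).trans ?_) (norm_pow_sub_pow_le hx hy n)
      gcongr
      exact (norm_pow_le _ _).trans (pow_le_pow_left₀ (norm_nonneg _) hx n)
    _ = (‖w - 1‖ + n * (ρ⁻¹ * ‖x - y‖)) * ρ ^ n := by
      rw [hρn]
      ring

theorem exists_pos_forall_mul_le_of_isCompact {X : Type*} [TopologicalSpace X] {K : Set X}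
    (hK : IsCompact K) {f g : X → ℝ} (hg : ∀ x ∈ K, 0 ≤ g x)
    (h : ∀ x ∈ K, ∃ c > 0, ∀ᶠ y in 𝓝[K] x, c * g y ≤ f y) :
    ∃ c > 0, ∀ x ∈ K, c * g x ≤ f x := by
  suffices ∃ c > 0, ∀ x ∈ K, x ∈ K → c * g x ≤ f x by simpa using this
  refine hK.induction_on (p := fun S => ∃ c > 0, ∀ x ∈ S, x ∈ K → c * g x ≤ f x)
    ⟨1, one_pos, by simp⟩ ?_ ?_ ?_
  · rintro S T hST ⟨c, hc, hT⟩
    exact ⟨c, hc, fun x hx => hT x (hST hx)⟩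
  · rintro S T ⟨c, hc, hS⟩ ⟨d, hd, hT⟩
    refine ⟨min c d, lt_min hc hd, fun x hx hxK => ?_⟩
    have hgx := hg x hxK
    rcases hx with hx | hx
    · exact le_trans (by gcongr; exact min_le_left c d) (hS x hx hxK)
    · exact le_trans (by gcongr; exact min_le_right c d) (hT x hx hxK)
  · intro x hx
    obtain ⟨c, hc, hev⟩ := h x hx
    exact ⟨_, hev, c, hc, fun y hy _ => hy⟩

theorem exists_norm_le_exp_neg_mul_sq {K : Set ℝ} (hK : IsCompact K) {ψ : ℝ → ℂ} {s : ℝ}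
    (hs : 0 < s) (hψ : ContinuousOn ψ K) (hlt : ∀ θ ∈ K, θ ≠ 0 → ‖ψ θ‖ < 1)
    (hexp : (fun θ => ψ θ - (1 - s / 2 * θ ^ 2 : ℝ)) =o[𝓝[K] 0] fun θ => θ ^ 2) :
    ∃ c > 0, ∀ θ ∈ K, ‖ψ θ‖ ≤ Real.exp (-c * θ ^ 2) := by
  obtain ⟨c, hc, h⟩ : ∃ c > 0, ∀ θ ∈ K, c * θ ^ 2 ≤ 1 - ‖ψ θ‖ := by
    refine exists_pos_forall_mul_le_of_isCompact hK (fun θ _ => sq_nonneg θ) fun θ hθ => ?_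
    rcases eq_or_ne θ 0 with rfl | hθ0
    · have hsmall : ∀ᶠ θ in 𝓝[K] (0 : ℝ), s / 2 * θ ^ 2 < 1 := by
        have : Tendsto (fun θ : ℝ => s / 2 * θ ^ 2) (𝓝 0) (𝓝 (s / 2 * 0 ^ 2)) :=
          Continuous.tendsto (by fun_prop) 0
        exact (this.mono_left nhdsWithin_le_nhds).eventually_lt_const (by norm_num)
      refine ⟨s / 4, by positivity, ?_⟩
      filter_upwards [hexp.bound (show 0 < s / 4 by positivity), hsmall] with θ hθ hθ1
      rw [norm_pow, Real.norm_eq_abs, sq_abs] at hθ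
      have := norm_le_norm_sub_add (ψ θ) (1 - s / 2 * θ ^ 2 : ℝ)
      rw [Complex.norm_real, Real.norm_of_nonneg (by linarith)] at this
      linarith
    · obtain ⟨c, hc, hlt⟩ := exists_pos_mul_lt (sub_pos.mpr (hlt θ hθ hθ0)) (θ ^ 2)
      refine ⟨c, hc, (Tendsto.eventually_lt ?_ ?_ hlt).mono fun _ h => h.le⟩
      · simp only [mul_comm c]
        exact Continuous.continuousWithinAt (by fun_prop)
      · exact (hψ θ hθ).norm.const_sub 1
  refine ⟨c, hc, fun θ hθ => ?_⟩
  linarith [h θ hθ, Real.add_one_le_exp (-c * θ ^ 2)]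

theorem abs_exp_neg_sub_one_sub_le {y r : ℝ} (hy : 0 ≤ y) (hr1 : 1 ≤ r) (hr2 : r ≤ 2) :
    |Real.exp (-y) - (1 - y)| ≤ y ^ r := by
  have hexp_ge := Real.add_one_le_exp (-y)
  rcases le_total y 1 with h | h
  · have := Real.norm_exp_sub_one_sub_id_le (x := -y) (by rwa [norm_neg, Real.norm_of_nonneg hy])
    calc |Real.exp (-y) - (1 - y)| = ‖Real.exp (-y) - 1 - -y‖ := by
          rw [Real.norm_eq_abs]; ring_nf
      _ ≤ y ^ (2 : ℝ) := by rwa [norm_neg, Real.norm_of_nonneg hy, ← Real.rpow_two] at this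
      _ ≤ y ^ r := Real.rpow_le_rpow_of_exponent_ge' hy h (by linarith) hr2
  · have hexp_le := Real.exp_le_one_iff.mpr (neg_nonpos.mpr hy)
    calc |Real.exp (-y) - (1 - y)| ≤ y := by rw [abs_of_nonneg] <;> linarith
      _ ≤ y ^ r := Real.self_le_rpow_of_one_le h hr1

theorem norm_sub_exp_neg_mul_sq_le {z : ℂ} {θ s C r : ℝ} (hs : 0 ≤ s) (hr2 : 2 ≤ r) (hr4 : r ≤ 4)
    (hz : ‖z - (1 - s / 2 * θ ^ 2 : ℝ)‖ ≤ C * |θ| ^ r) :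
    ‖z - Real.exp (-(s / 2) * θ ^ 2)‖ ≤ (C + (s / 2) ^ (r / 2)) * |θ| ^ r := by
  have hpow : (s / 2 * θ ^ 2) ^ (r / 2) = (s / 2) ^ (r / 2) * |θ| ^ r := by
    rw [Real.mul_rpow (by positivity) (by positivity), ← sq_abs, ← Real.rpow_two,
      ← Real.rpow_mul (abs_nonneg θ), mul_div_cancel₀ r two_ne_zero]
  have hgauss := abs_exp_neg_sub_one_sub_le (y := s / 2 * θ ^ 2) (r := r / 2) (by positivity)
    (by linarith) (by linarith)
  rw [hpow, abs_sub_comm, ← Real.norm_eq_abs, ← Complex.norm_real, Complex.ofReal_sub,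
    ← neg_mul] at hgauss
  rw [add_mul]
  exact (norm_sub_le_norm_sub_add_norm_sub _ _ _).trans (add_le_add hz hgauss)

/-- An integrable bound for the error made by replacing `ψ θ ^ n * w θ` on `[-a, a]` by the Gaussian
`exp (-(s / 2) * θ ^ 2) ^ n` on `ℝ`: the first term accounts for `w θ - 1` and for the tails of the
Gaussian, the second one for the difference of the `n`-th powers. -/
noncomputable def laplaceMajorant (c r L D : ℝ) (n : ℕ) (θ : ℝ) : ℝ :=
  L * (|θ| ^ (1 : ℝ) * Real.exp (-(c * n) * θ ^ 2)) +
    D * (n * (|θ| ^ r * Real.exp (-(c * n) * θ ^ 2)))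

theorem norm_pow_mul_sub_exp_le {z w : ℂ} {θ a s c B L r : ℝ} (hθ : |θ| ≤ a) (hc : 0 ≤ c)
    (hcs : c ≤ s / 2) (hz : ‖z‖ ≤ Real.exp (-c * θ ^ 2))
    (hzB : ‖z - Real.exp (-(s / 2) * θ ^ 2)‖ ≤ B * |θ| ^ r) (hw : ‖w - 1‖ ≤ L * |θ|) (n : ℕ) :
    ‖z ^ n * w - Real.exp (-(s / 2 * n) * θ ^ 2)‖ ≤
      laplaceMajorant c r L (Real.exp (c * a ^ 2) * B) n θ := by
  have hpow (b : ℝ) : Real.exp (-(b * n) * θ ^ 2) = Real.exp (-b * θ ^ 2) ^ n := by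
    rw [← Real.exp_nat_mul]
    ring_nf
  have hinv : (Real.exp (-c * θ ^ 2))⁻¹ ≤ Real.exp (c * a ^ 2) := by
    rw [← Real.exp_neg, neg_mul, neg_neg, ← sq_abs]
    gcongr
  have hgauss : ‖(Real.exp (-(s / 2) * θ ^ 2) : ℂ)‖ ≤ Real.exp (-c * θ ^ 2) := by
    rw [Complex.norm_real, Real.norm_of_nonneg (Real.exp_pos _).le]
    gcongr
  rw [laplaceMajorant, hpow, hpow, Complex.ofReal_pow]
  calc _ ≤ (‖w - 1‖ + n * ((Real.exp (-c * θ ^ 2))⁻¹ * ‖z - Real.exp (-(s / 2) * θ ^ 2)‖)) *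
        Real.exp (-c * θ ^ 2) ^ n := norm_pow_mul_sub_pow_le (Real.exp_pos _) hz hgauss n
    _ ≤ (L * |θ| + n * (Real.exp (c * a ^ 2) * (B * |θ| ^ r))) * Real.exp (-c * θ ^ 2) ^ n := by
      gcongr
    _ = _ := by
      rw [Real.rpow_one]
      ring

theorem exp_neg_mul_sq_le_laplaceMajorant {a c r s L D θ : ℝ} (ha : 0 < a) (hcs : c ≤ s / 2)
    (hL : a⁻¹ ≤ L) (hD : 0 ≤ D) (hθ : a ≤ |θ|) (n : ℕ) :
    Real.exp (-(s / 2 * n) * θ ^ 2) ≤ laplaceMajorant c r L D n θ := by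
  have hLθ : 1 ≤ L * |θ| ^ (1 : ℝ) := by
    rw [Real.rpow_one, ← inv_mul_cancel₀ ha.ne']
    gcongr
    exact (inv_pos.mpr ha).le.trans hL
  calc Real.exp (-(s / 2 * n) * θ ^ 2) ≤ 1 * Real.exp (-(c * n) * θ ^ 2) := by
        rw [one_mul]
        gcongr
    _ ≤ L * |θ| ^ (1 : ℝ) * Real.exp (-(c * n) * θ ^ 2) := by gcongr
    _ ≤ laplaceMajorant c r L D n θ := by
        rw [laplaceMajorant, mul_assoc]
        exact le_add_of_nonneg_right (by positivity)

theorem integrable_laplaceMajorant {c r : ℝ} (hc : 0 < c) (hr : -1 < r) (L D : ℝ) {n : ℕ}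
    (hn : n ≠ 0) : Integrable (laplaceMajorant c r L D n) := by
  have hcn : 0 < c * n := by positivity
  exact ((integrable_abs_rpow_mul_exp_neg_mul_sq (by norm_num) hcn).const_mul L).add
    (((integrable_abs_rpow_mul_exp_neg_mul_sq hr hcn).const_mul _).const_mul D)

theorem isBigO_rpow_atTop_of_le {r t : ℝ} (h : r ≤ t) :
    (fun x : ℝ => x ^ r) =O[atTop] fun x => x ^ t := by
  refine .of_bound 1 ?_
  filter_upwards [eventually_ge_atTop 1] with x hx
  rw [one_mul, Real.norm_of_nonneg (by positivity), Real.norm_of_nonneg (by positivity)]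
  exact Real.rpow_le_rpow_of_exponent_le hx h

theorem isBigO_integral_laplaceMajorant {c δ : ℝ} (hc : 0 < c) (hδ0 : 0 ≤ δ) (hδ1 : δ ≤ 1)
    (L D : ℝ) :
    (fun n => ∫ θ, laplaceMajorant c (2 + δ) L D n θ) =O[atTop]
      fun n : ℕ => (n : ℝ) ^ (-(1 : ℝ) / 2 - δ / 2) := by
  have hO {r : ℝ} (hr : -1 < r) := (isBigO_integral_abs_rpow_mul_exp_neg_mul_sq hr hc).comp_tendsto
    tendsto_natCast_atTop_atTop
  have hL := (hO (r := 1) (by norm_num)).trans <|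
    (isBigO_rpow_atTop_of_le (show -(1 + 1) / 2 ≤ -(1 : ℝ) / 2 - δ / 2 by linarith)).comp_tendsto
      tendsto_natCast_atTop_atTop
  have hD := ((isBigO_refl (fun n : ℕ => (n : ℝ)) atTop).mul (hO (r := 2 + δ) (by linarith))).congr
    (fun _ => rfl) (g₂ := fun n : ℕ => (n : ℝ) ^ (-(1 : ℝ) / 2 - δ / 2)) fun n => by
      rw [Function.comp_apply, ← Real.rpow_one_add' (Nat.cast_nonneg n) (by linarith)]
      ring_nf
  refine ((hL.const_mul_left L).add (hD.const_mul_left D)).congr' ?_ .rfl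
  filter_upwards [eventually_ne_atTop 0] with n hn
  have hcn : 0 < c * n := by positivity
  simp only [laplaceMajorant]
  rw [integral_add, integral_const_mul, integral_const_mul, integral_const_mul]
  · rfl
  · exact (integrable_abs_rpow_mul_exp_neg_mul_sq (by norm_num) hcn).const_mul L
  · exact ((integrable_abs_rpow_mul_exp_neg_mul_sq (by linarith) hcn).const_mul _).const_mul D

theorem isLittleO_sq_of_norm_le_rpow {E : Type*} [NormedAddCommGroup E] {K : Set ℝ} {f : ℝ → E}
    {C δ : ℝ} (hδ : 0 < δ) (hf : ∀ θ ∈ K, ‖f θ‖ ≤ C * |θ| ^ (2 + δ)) :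
    f =o[𝓝[K] 0] fun θ => θ ^ 2 := by
  have hO : f =O[𝓝[K] 0] fun θ => θ ^ 2 * |θ| ^ δ := by
    refine .of_bound C (eventually_mem_nhdsWithin.mono fun θ hθ => ?_)
    rw [Real.norm_of_nonneg (by positivity), ← sq_abs, ← Real.rpow_two,
      ← Real.rpow_add_of_nonneg (abs_nonneg θ) zero_le_two hδ.le]
    exact hf θ hθ
  have ho : (fun θ : ℝ => |θ| ^ δ) =o[𝓝[K] 0] fun _ => (1 : ℝ) := by
    have h : Continuous fun θ : ℝ => |θ| ^ δ := continuous_abs.rpow_const fun _ => .inr hδ.le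
    rw [isLittleO_one_iff]
    simpa [Real.zero_rpow hδ.ne'] using (h.tendsto 0).mono_left nhdsWithin_le_nhds
  simpa using hO.trans_isLittleO ((isBigO_refl (fun θ : ℝ => θ ^ 2) _).mul_isLittleO ho)

theorem norm_integral_pow_mul_sub_le {ψ w : ℝ → ℂ} {a s c C L r : ℝ} (ha : 0 < a) (hc : 0 < c)
    (hcs : c ≤ s / 2) (hr2 : 2 ≤ r) (hr4 : r ≤ 4) (hψ : ContinuousOn ψ (Icc (-a) a))
    (hw : ContinuousOn w (Icc (-a) a))
    (hψc : ∀ θ ∈ Icc (-a) a, ‖ψ θ‖ ≤ Real.exp (-c * θ ^ 2))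
    (hψs : ∀ θ ∈ Icc (-a) a, ‖ψ θ - (1 - s / 2 * θ ^ 2 : ℝ)‖ ≤ C * |θ| ^ r)
    (hwL : ∀ θ ∈ Icc (-a) a, ‖w θ - 1‖ ≤ L * |θ|) {n : ℕ} (hn : n ≠ 0) :
    ‖(∫ θ in -a..a, ψ θ ^ n * w θ) - (√(π / (s / 2 * n)) : ℝ)‖ ≤
      ∫ θ, laplaceMajorant c r (L + a⁻¹) (Real.exp (c * a ^ 2) * (C + (s / 2) ^ (r / 2))) n θ := by
  have hs : 0 < s / 2 := hc.trans_le hcs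
  have haK : a ∈ Icc (-a) a := ⟨by linarith, le_rfl⟩
  have hC : 0 ≤ C := nonneg_of_mul_nonneg_left ((norm_nonneg _).trans (hψs a haK)) (by positivity)
  have hL : 0 ≤ L := nonneg_of_mul_nonneg_left ((norm_nonneg _).trans (hwL a haK)) (by positivity)
  rw [← integral_gaussian, ← integral_complex_ofReal, intervalIntegral.integral_of_le (by linarith)]
  refine norm_setIntegral_sub_integral_le measurableSet_Ioc ?_ ?_
    (integrable_laplaceMajorant hc (by linarith) _ _ hn) (fun θ hθ => ?_) fun θ hθ => ?_
  · exact (((hψ.pow n).mul hw).integrableOn_Icc).mono_set Ioc_subset_Icc_self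
  · exact (integrable_exp_neg_mul_sq (by positivity)).ofReal
  · have hθ := Ioc_subset_Icc_self hθ
    refine norm_pow_mul_sub_exp_le (abs_le.mpr hθ) hc.le hcs (hψc θ hθ)
      (norm_sub_exp_neg_mul_sq_le (by linarith) hr2 hr4 (hψs θ hθ)) ((hwL θ hθ).trans ?_) n
    gcongr
    exact le_add_of_nonneg_right (by positivity)
  · rw [Complex.norm_real, Real.norm_of_nonneg (Real.exp_pos _).le]
    refine exp_neg_mul_sq_le_laplaceMajorant ha hcs (le_add_of_nonneg_left hL) (by positivity) ?_ n
    contrapose! hθ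
    exact ⟨(abs_lt.mp hθ).1, (abs_lt.mp hθ).2.le⟩

theorem isBigO_integral_pow_mul {ψ w : ℝ → ℂ} {a s C L δ : ℝ} (ha : 0 < a) (hs : 0 < s)
    (hδ0 : 0 < δ) (hδ1 : δ ≤ 1) (hψ : ContinuousOn ψ (Icc (-a) a))
    (hw : ContinuousOn w (Icc (-a) a)) (hlt : ∀ θ ∈ Icc (-a) a, θ ≠ 0 → ‖ψ θ‖ < 1)
    (hψs : ∀ θ ∈ Icc (-a) a, ‖ψ θ - (1 - s / 2 * θ ^ 2 : ℝ)‖ ≤ C * |θ| ^ (2 + δ))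
    (hwL : ∀ θ ∈ Icc (-a) a, ‖w θ - 1‖ ≤ L * |θ|) :
    (fun n : ℕ => (∫ θ in -a..a, ψ θ ^ n * w θ) - (√(π / (s / 2 * n)) : ℝ)) =O[atTop]
      fun n => (n : ℝ) ^ (-(1 : ℝ) / 2 - δ / 2) := by
  obtain ⟨c, hc, hcs, hψc⟩ :
      ∃ c > 0, c ≤ s / 2 ∧ ∀ θ ∈ Icc (-a) a, ‖ψ θ‖ ≤ Real.exp (-c * θ ^ 2) := by
    obtain ⟨c, hc, h⟩ := exists_norm_le_exp_neg_mul_sq isCompact_Icc hs hψ hlt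
      (isLittleO_sq_of_norm_le_rpow hδ0 hψs)
    refine ⟨min c (s / 2), lt_min hc (by positivity), min_le_right _ _, fun θ hθ => ?_⟩
    refine (h θ hθ).trans ?_
    gcongr
    exact min_le_left _ _
  refine IsBigO.trans (.of_bound 1 ?_) (isBigO_integral_laplaceMajorant hc hδ0.le hδ1 (L + a⁻¹)
    (Real.exp (c * a ^ 2) * (C + (s / 2) ^ ((2 + δ) / 2))))
  filter_upwards [eventually_ne_atTop 0] with n hn
  rw [one_mul]
  exact (norm_integral_pow_mul_sub_le ha hc hcs (by linarith) (by linarith) hψ hw hψc hψs hwL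
    hn).trans (Real.le_norm_self _)

end LaplaceMethod

section CharacteristicFunction

open Complex

theorem norm_exp_I_mul_sub_taylor_le (x : ℝ) {r : ℝ} (hr2 : 2 ≤ r) (hr3 : r ≤ 3) :
    ‖exp (I * x) - 1 - I * x + (x : ℂ) ^ 2 / 2‖ ≤ 4 * |x| ^ r := by
  have hIx : ‖I * (x : ℂ)‖ = |x| := by simp
  rcases le_total |x| 1 with h | h
  · have htaylor := norm_exp_sub_sum_le_norm_mul_exp (I * x) 3
    have hsum : ∑ m ∈ Finset.range 3, (I * x) ^ m / (m.factorial : ℂ) =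
        1 + I * x - (x : ℂ) ^ 2 / 2 := by
      simp only [Finset.sum_range_succ, Finset.sum_range_zero, Nat.factorial]
      push_cast
      linear_combination ((x : ℂ) ^ 2 / 2) * I_sq
    have hexp : Real.exp |x| ≤ 4 := by
      linarith [Real.exp_le_exp.mpr h, Real.exp_one_lt_d9]
    rw [hsum, hIx, ← Real.rpow_natCast] at htaylor
    calc _ = ‖exp (I * x) - (1 + I * x - (x : ℂ) ^ 2 / 2)‖ := by ring_nf
      _ ≤ |x| ^ ((3 : ℕ) : ℝ) * Real.exp |x| := htaylor
      _ ≤ |x| ^ r * 4 := by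
        gcongr ?_ * ?_
        exact Real.rpow_le_rpow_of_exponent_ge' (abs_nonneg x) h (by linarith)
          (by exact_mod_cast hr3)
      _ = 4 * |x| ^ r := mul_comm _ _
  · have h1 : 1 ≤ |x| ^ r := Real.one_le_rpow h (by linarith)
    have h2 : |x| ≤ |x| ^ r := Real.self_le_rpow_of_one_le h (by linarith)
    have h3 : |x| ^ 2 ≤ |x| ^ r := by
      simpa using Real.rpow_le_rpow_of_exponent_le h hr2
    calc _ ≤ ‖exp (I * x)‖ + ‖(1 : ℂ)‖ + ‖I * (x : ℂ)‖ + ‖(x : ℂ) ^ 2 / 2‖ :=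
          norm_add_le_of_le (norm_sub_le_of_le (norm_sub_le _ _) le_rfl) le_rfl
      _ = 1 + 1 + |x| + |x| ^ 2 / 2 := by
          rw [norm_exp_I_mul_ofReal, hIx, norm_one, norm_div, norm_pow, norm_real,
            Real.norm_eq_abs, RCLike.norm_ofNat]
      _ ≤ 4 * |x| ^ r := by linarith

theorem eq_of_hasSum_smul_of_norm_eq_one {ι E : Type*} [NormedAddCommGroup E]
    [InnerProductSpace ℝ E] {p : ι → ℝ} {v : ι → E} {φ : E} (hp : ∀ k, 0 ≤ p k) (hp1 : HasSum p 1)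
    (hv : ∀ k, ‖v k‖ ≤ 1) (h : HasSum (fun k => p k • v k) φ) (hφ : ‖φ‖ = 1) {k : ι}
    (hk : p k ≠ 0) : v k = φ := by
  have hinner : HasSum (fun k => p k * (1 - inner ℝ φ (v k))) 0 := by
    have := hp1.sub (h.mapL (innerSL ℝ φ))
    simpa [inner_smul_right, mul_sub, hφ] using this
  have hle (k : ι) : inner ℝ φ (v k) ≤ 1 :=
    (real_inner_le_norm φ (v k)).trans (by rw [hφ, one_mul]; exact hv k)
  have hzero := (hasSum_zero_iff_of_nonneg fun k => mul_nonneg (hp k) (sub_nonneg.mpr (hle k))).mp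
    hinner
  have hk1 : inner ℝ φ (v k) = 1 :=
    (sub_eq_zero.mp ((mul_eq_zero.mp (congrFun hzero k)).resolve_left hk)).symm
  have hvk : ‖v k‖ ^ 2 ≤ 1 := pow_le_one₀ (norm_nonneg _) (hv k)
  have hsq := norm_sub_sq_real φ (v k)
  rw [hk1, hφ] at hsq
  have : ‖φ - v k‖ ^ 2 = 0 := le_antisymm (by linarith) (sq_nonneg _)
  exact (sub_eq_zero.mp (norm_eq_zero.mp (pow_eq_zero_iff two_ne_zero |>.mp this))).symm

theorem norm_ofReal_mul_exp_I_mul_ofReal (r x : ℝ) : ‖(r : ℂ) * exp (I * x)‖ = |r| := by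
  rw [norm_mul, norm_exp_I_mul_ofReal, mul_one, norm_real, Real.norm_eq_abs]

variable {ι : Type*} {p x : ι → ℝ}

/-- The characteristic function of the discrete measure on `ℝ` with mass `p k` at `x k`. -/
noncomputable def discreteCharFun (p x : ι → ℝ) (θ : ℝ) : ℂ :=
  ∑' k, (p k : ℂ) * exp (I * (x k * θ : ℝ))

theorem hasSum_discreteCharFun (hp : Summable p) (x : ι → ℝ) (θ : ℝ) :
    HasSum (fun k => (p k : ℂ) * exp (I * (x k * θ : ℝ))) (discreteCharFun p x θ) :=
  (Summable.of_norm_bounded hp.abs fun _ => (norm_ofReal_mul_exp_I_mul_ofReal _ _).le).hasSum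

theorem continuous_discreteCharFun (hp : Summable p) (x : ι → ℝ) :
    Continuous (discreteCharFun p x) :=
  continuous_tsum (fun _ => by fun_prop) hp.abs fun _ _ =>
    (norm_ofReal_mul_exp_I_mul_ofReal _ _).le

theorem norm_discreteCharFun_sub_le {s r : ℝ} (hr2 : 2 ≤ r) (hr3 : r ≤ 3) (h0 : HasSum p 1)
    (h1 : HasSum (fun k => x k * p k) 0) (h2 : HasSum (fun k => x k ^ 2 * p k) s)
    (hr : Summable fun k => |x k| ^ r * p k) (θ : ℝ) :
    ‖discreteCharFun p x θ - (1 - s / 2 * θ ^ 2 : ℝ)‖ ≤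
      4 * (∑' k, |(|x k| ^ r * p k)|) * |θ| ^ r := by
  have hsum := (((hasSum_discreteCharFun h0.summable x θ).sub (hasSum_ofReal.mpr h0)).sub
    ((hasSum_ofReal.mpr h1).mul_left (I * θ))).add ((hasSum_ofReal.mpr h2).mul_left (θ ^ 2 / 2 : ℂ))
  have heq : discreteCharFun p x θ - (1 - s / 2 * θ ^ 2 : ℝ) =
      discreteCharFun p x θ - (1 : ℝ) - I * θ * (0 : ℝ) + (θ : ℂ) ^ 2 / 2 * s := by
    push_cast
    ring
  rw [heq, ← hsum.tsum_eq]
  refine tsum_of_norm_bounded ((hr.abs.hasSum.mul_left 4).mul_right _) fun k => ?_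
  calc _ = ‖(p k : ℂ) * (exp (I * (x k * θ : ℝ)) - 1 - I * (x k * θ : ℝ) +
        ((x k * θ : ℝ) : ℂ) ^ 2 / 2)‖ := by
        push_cast
        ring_nf
    _ ≤ |p k| * (4 * |x k * θ| ^ r) := by
        rw [norm_mul, norm_real, Real.norm_eq_abs]
        gcongr
        exact norm_exp_I_mul_sub_taylor_le _ hr2 hr3
    _ = 4 * |(|x k| ^ r * p k)| * |θ| ^ r := by
        rw [abs_mul, Real.mul_rpow (abs_nonneg _) (abs_nonneg _), abs_mul,
          abs_of_nonneg (Real.rpow_nonneg (abs_nonneg (x k)) r)]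
        ring

theorem norm_discreteCharFun_lt_one {p : ℕ → ℝ} (hp : ∀ k, 0 ≤ p k) (hp1 : HasSum p 1)
    (hp0 : p 0 ≠ 0) (hspan : ∀ d : ℕ, (∀ k, p k ≠ 0 → d ∣ k) → d = 1) (c : ℝ) {θ : ℝ}
    (hθ0 : θ ≠ 0) (hθ : |θ| < 2 * π) : ‖discreteCharFun p (fun k => k - c) θ‖ < 1 := by
  have hsum := hasSum_discreteCharFun hp1.summable (fun k : ℕ => k - c) θ
  have hle : ‖discreteCharFun p (fun k => k - c) θ‖ ≤ 1 :=
    hsum.tsum_eq ▸ tsum_of_norm_bounded hp1 fun k => by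
      rw [norm_ofReal_mul_exp_I_mul_ofReal, abs_of_nonneg (hp k)]
  refine hle.lt_of_ne fun heq => hθ0 ?_
  have hphase {k : ℕ} (hk : p k ≠ 0) :
      exp (I * ((k - c) * θ : ℝ)) = discreteCharFun p (fun k => k - c) θ :=
    eq_of_hasSum_smul_of_norm_eq_one (v := fun k : ℕ => exp (I * ((k - c) * θ : ℝ))) hp hp1
      (fun _ => (norm_exp_I_mul_ofReal _).le) (by simpa only [real_smul] using hsum) heq hk
  have hpow {k : ℕ} (hk : p k ≠ 0) : exp (θ * I) ^ k = 1 := by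
    have h := (hphase hk).trans (hphase hp0).symm
    have hsplit : I * ((k - c) * θ : ℝ) = k * (θ * I) + I * (((0 : ℕ) - c) * θ : ℝ) := by
      push_cast
      ring
    rwa [hsplit, exp_add, exp_nat_mul, mul_eq_right₀ (exp_ne_zero _)] at h
  have hone : exp (θ * I) = 1 :=
    orderOf_eq_one_iff.mp (hspan _ fun k hk => orderOf_dvd_of_pow_eq_one (hpow hk))
  have hcos : Real.cos θ = 1 := by rw [← exp_ofReal_mul_I_re, hone, one_re]
  exact (Real.cos_eq_one_iff_of_lt_of_lt (abs_lt.mp hθ).1 (abs_lt.mp hθ).2).mp hcos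

end CharacteristicFunction

section LocalLimitTheorem

open PowerSeries

theorem summable_abs_sub_one_rpow_mul {p : ℕ → ℝ} (hp : ∀ k, 0 ≤ p k) {r : ℝ} (hr : 0 ≤ r)
    (h : Summable fun k : ℕ => (k : ℝ) ^ r * p k) :
    Summable fun k : ℕ => |(k : ℝ) - 1| ^ r * p k := by
  refine h.of_norm_bounded_eventually_nat ?_
  filter_upwards [eventually_ge_atTop 1] with k hk
  have hk1 : (1 : ℝ) ≤ k := by exact_mod_cast hk
  rw [norm_mul, Real.norm_of_nonneg (by positivity), Real.norm_of_nonneg (hp k),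
    abs_of_nonneg (by linarith)]
  have := hp k
  gcongr
  linarith

/-- A critical offspring distribution: a probability distribution on `ℕ` of mean `1`. -/
structure IsCriticalOffspring (p : ℕ → ℝ) : Prop where
  nonneg : ∀ k, 0 ≤ p k
  hasSum_one : HasSum p 1
  hasSum_mean : HasSum (fun k => k * p k) 1

namespace IsCriticalOffspring

variable {p : ℕ → ℝ} {s : ℝ}

theorem hasSum_sub_one_mul (hp : IsCriticalOffspring p) :
    HasSum (fun k : ℕ => ((k : ℝ) - 1) * p k) 0 := by
  simpa [sub_mul] using hp.hasSum_mean.sub hp.hasSum_one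

theorem hasSum_sub_one_sq_mul (hp : IsCriticalOffspring p)
    (hs : HasSum (fun k : ℕ => (k : ℝ) * ((k : ℝ) - 1) * p k) s) :
    HasSum (fun k : ℕ => ((k : ℝ) - 1) ^ 2 * p k) s := by
  have h := hs.sub hp.hasSum_sub_one_mul
  rw [sub_zero] at h
  exact h.congr_fun fun k => by ring

theorem zero_ne (hp : IsCriticalOffspring p)
    (hs : HasSum (fun k : ℕ => (k : ℝ) * ((k : ℝ) - 1) * p k) s) (hs0 : s ≠ 0) : p 0 ≠ 0 := by
  intro h0
  have hnonneg (k : ℕ) : 0 ≤ ((k : ℝ) - 1) * p k := by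
    rcases k with _ | k
    · simp [h0]
    · exact mul_nonneg (by simp) (hp.nonneg _)
  have hzero := (hasSum_zero_iff_of_nonneg hnonneg).mp hp.hasSum_sub_one_mul
  refine hs0 (hs.unique ?_)
  convert hasSum_zero with k
  rw [mul_assoc, congrFun hzero k, Pi.zero_apply, mul_zero]

end IsCriticalOffspring

theorem evalSum_map_ofReal_mk (p : ℕ → ℝ) (θ : ℝ) :
    evalSum (map Complex.ofRealHom (mk p)) (Complex.exp (Complex.I * θ)) =
      discreteCharFun p (fun k => k - 1) θ * Complex.exp (Complex.I * θ) := by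
  rw [evalSum, discreteCharFun, ← tsum_mul_right]
  refine tsum_congr fun k => ?_
  rw [coeff_map, coeff_mk, mul_assoc, ← Complex.exp_nat_mul, ← Complex.exp_add]
  congr 2
  push_cast
  ring

theorem integral_discreteCharFun_pow_mul_exp {p : ℕ → ℝ} (hp : Summable p) (j n : ℕ) :
    ∫ θ : ℝ in -π..π,
      discreteCharFun p (fun k => k - 1) θ ^ n * Complex.exp (Complex.I * (j * θ : ℝ)) =
      ((2 * π * coeff n (X ^ j * mk p ^ n) : ℝ) : ℂ) := by
  set P : ℂ⟦X⟧ := map Complex.ofRealHom (mk p) with hP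
  have hPA : P ∈ wienerAlgebra ℂ := by
    simpa [mem_wienerAlgebra, hP] using hp.abs
  have hXj : (X : ℂ⟦X⟧) ^ j ∈ wienerAlgebra ℂ := pow_mem X_mem_wienerAlgebra j
  have hcoeff : ((coeff n (X ^ j * mk p ^ n) : ℝ) : ℂ) = coeff n (X ^ j * P ^ n) := by
    rw [hP, ← map_X Complex.ofRealHom, ← map_pow, ← map_pow, ← map_mul, coeff_map]
    rfl
  rw [Complex.ofReal_mul, hcoeff, Complex.ofReal_mul, Complex.ofReal_ofNat,
    ← integral_evalSum_exp_mul_exp (mul_mem hXj (pow_mem hPA n))]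
  refine intervalIntegral.integral_congr fun θ _ => ?_
  have hθ : ‖Complex.exp (Complex.I * θ)‖ ≤ 1 := (Complex.norm_exp_I_mul_ofReal θ).le
  rw [evalSum_mul hXj (pow_mem hPA n) hθ, evalSum_pow X_mem_wienerAlgebra hθ, evalSum_X,
    evalSum_pow hPA hθ, evalSum_map_ofReal_mk, mul_pow, ← Complex.exp_nat_mul,
    ← Complex.exp_nat_mul, mul_left_comm, mul_assoc, mul_assoc, ← Complex.exp_add,
    ← Complex.exp_add]
  congr 2
  push_cast
  ring

theorem sqrt_pi_div_eq {s x : ℝ} (hs : 0 ≤ s) (hx : 0 ≤ x) :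
    √(π / (s / 2 * x)) = 2 * π * ((2 * π * s) ^ (-(1 : ℝ) / 2) * x ^ (-(1 : ℝ) / 2)) := by
  have hpow {y : ℝ} (hy : 0 ≤ y) : y ^ (-(1 : ℝ) / 2) = √y⁻¹ := by
    rw [neg_div, Real.rpow_neg hy, Real.sqrt_eq_rpow, Real.inv_rpow hy]
  have hsq : π / (s / 2 * x) = (2 * π) ^ 2 * ((2 * π * s)⁻¹ * x⁻¹) := by field_simp
  rw [hpow (by positivity), hpow hx, hsq, Real.sqrt_mul (by positivity),
    Real.sqrt_sq (by positivity), Real.sqrt_mul (by positivity)]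

theorem IsCriticalOffspring.isBigO_coeff_X_pow_mul_pow_sub {p : ℕ → ℝ} {s δ : ℝ}
    (hp : IsCriticalOffspring p) (hspan : ∀ d : ℕ, (∀ k, p k ≠ 0 → d ∣ k) → d = 1)
    (hs : HasSum (fun k : ℕ => (k : ℝ) * ((k : ℝ) - 1) * p k) s) (hs0 : 0 < s) (hδ0 : 0 < δ)
    (hδ1 : δ ≤ 1) (hmom : Summable fun k : ℕ => (k : ℝ) ^ (2 + δ) * p k) (j : ℕ) :
    (fun n : ℕ => coeff n (X ^ j * PowerSeries.mk p ^ n) -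
        (2 * π * s) ^ (-(1 : ℝ) / 2) * (n : ℝ) ^ (-(1 : ℝ) / 2)) =O[atTop]
      fun n : ℕ => (n : ℝ) ^ (-(1 : ℝ) / 2 - δ / 2) := by
  have hw (θ : ℝ) : ‖Complex.exp (Complex.I * (j * θ : ℝ)) - 1‖ ≤ j * |θ| := by
    simpa using Real.norm_exp_I_mul_ofReal_sub_one_le (x := j * θ)
  have hlt (θ : ℝ) (hθ : θ ∈ Set.Icc (-π) π) (hθ0 : θ ≠ 0) :
      ‖discreteCharFun p (fun k => k - 1) θ‖ < 1 :=
    norm_discreteCharFun_lt_one hp.nonneg hp.hasSum_one (hp.zero_ne hs hs0.ne') hspan 1 hθ0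
      ((abs_le.mpr hθ).trans_lt (by linarith [Real.pi_pos]))
  have hint := isBigO_integral_pow_mul Real.pi_pos hs0 hδ0 hδ1
    (continuous_discreteCharFun hp.hasSum_one.summable _).continuousOn
    (Continuous.continuousOn (by fun_prop)) hlt
    (fun θ _ => norm_discreteCharFun_sub_le (by linarith) (by linarith) hp.hasSum_one
      hp.hasSum_sub_one_mul (hp.hasSum_sub_one_sq_mul hs)
      (summable_abs_sub_one_rpow_mul hp.nonneg (by linarith) hmom) θ) fun θ _ => hw θ
  refine IsBigO.trans (.of_bound (2 * π)⁻¹ (Eventually.of_forall fun n => ?_)) hint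
  rw [integral_discreteCharFun_pow_mul_exp hp.hasSum_one.summable, ← Complex.ofReal_sub,
    sqrt_pi_div_eq hs0.le n.cast_nonneg, ← mul_sub, Complex.norm_real, norm_mul,
    Real.norm_of_nonneg Real.two_pi_pos.le, inv_mul_cancel_left₀ Real.two_pi_pos.ne']

end LocalLimitTheorem

theorem hasSum_of_tsum_eq_of_ne_zero {ι α : Type*} [AddCommMonoid α] [TopologicalSpace α]
    {f : ι → α} {a : α} (ha : a ≠ 0) (h : ∑' i, f i = a) : HasSum f a := by
  have hf : Summable f := by
    contrapose! ha
    rw [← h, tsum_eq_zero_of_not_summable ha]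
  exact h ▸ hf.hasSum

theorem mk_eq_X_mul_subst_mk {p q : ℕ → ℝ} (hp : Summable p) (hq : Summable q) (hq0 : q 0 = 0)
    (hqnn : ∀ n, 0 ≤ q n) (hqsum : ∑' n, q n ≤ 1)
    (hfix : ∀ z ∈ Set.Icc (0 : ℝ) 1,
      (∑' n, q n * z ^ n) = z * ∑' k, p k * (∑' n, q n * z ^ n) ^ k) :
    PowerSeries.mk q = PowerSeries.X * (PowerSeries.mk p).subst (PowerSeries.mk q) := by
  refine eq_X_mul_subst_of_frequently_evalSum_eq ?_ ?_ (by simpa using hq0) ?_ ?_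
  · simpa [mem_wienerAlgebra] using hp.abs
  · simpa [mem_wienerAlgebra] using hq.abs
  · simpa [wienerNorm, abs_of_nonneg (hqnn _)] using hqsum
  · have hIoo : ∀ᶠ z : ℝ in 𝓝[>] 0, z ∈ Set.Ioo 0 1 := Ioo_mem_nhdsGT one_pos
    refine (hIoo.frequently.filter_mono (nhdsGT_le_nhdsNE 0)).mono fun z hz => ?_
    simpa [evalSum] using hfix z (Set.Ioo_subset_Icc_self hz)

/-- For a critical offspring distribution of span 1, with variance
`σ² ∈ (0,∞)` and a finite `(2+δ)`-th moment (`0 < δ ≤ 1`), the tree-size probabilities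
satisfy `q n = (2πσ²)^(-1/2) n^(-3/2) + O(n^(-3/2-δ/2))` as `n → ∞`. -/
theorem stmt2
    (p : ℕ → ℝ) (hp : ∀ k, 0 ≤ p k)
    (hpsum : ∑' k, p k = 1)
    (hcrit : ∑' k : ℕ, (k : ℝ) * p k = 1)
    (hspan : ∀ d : ℕ, (∀ k, p k ≠ 0 → d ∣ k) → d = 1)
    (hσpos : 0 < ∑' k : ℕ, (k : ℝ) * ((k : ℝ) - 1) * p k)
    (δ : ℝ) (hδ0 : 0 < δ) (hδ1 : δ ≤ 1)
    (hmom : Summable (fun k : ℕ => (k : ℝ) ^ ((2:ℝ) + δ) * p k))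
    (q : ℕ → ℝ) (hq0 : q 0 = 0) (hqnn : ∀ n, 0 ≤ q n)
    (hqsum : ∑' n, q n = 1)
    (hfix : ∀ z ∈ Set.Icc (0:ℝ) 1,
      (∑' n, q n * z ^ n) = z * ∑' k, p k * (∑' n, q n * z ^ n) ^ k) :
    Asymptotics.IsBigO Filter.atTop
      (fun n : ℕ => q n -
        (2 * Real.pi * ∑' k : ℕ, (k : ℝ) * ((k : ℝ) - 1) * p k) ^ (-(1:ℝ)/2) *
          (n : ℝ) ^ (-(3:ℝ)/2))
      (fun n : ℕ => (n : ℝ) ^ (-(3:ℝ)/2 - δ/2)) := by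
  have hp' : IsCriticalOffspring p :=
    ⟨hp, hasSum_of_tsum_eq_of_ne_zero one_ne_zero hpsum,
      hasSum_of_tsum_eq_of_ne_zero one_ne_zero hcrit⟩
  have hQ := mk_eq_X_mul_subst_mk hp'.hasSum_one.summable
    (hasSum_of_tsum_eq_of_ne_zero one_ne_zero hqsum).summable hq0 hqnn hqsum.le hfix
  have hllt := hp'.isBigO_coeff_X_pow_mul_pow_sub hspan
    (hasSum_of_tsum_eq_of_ne_zero hσpos.ne' rfl) hσpos hδ0 hδ1 hmom 1
  have hinv : (fun n : ℕ => (n : ℝ) ^ (-1 : ℝ)) =O[atTop] fun n : ℕ => (n : ℝ) ^ (-1 : ℝ) :=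
    isBigO_refl _ _
  refine (hinv.mul_atTop_rpow_natCast_of_isBigO_rpow (-1) _ _ hllt (by linarith)).congr' ?_ .rfl
  filter_upwards [eventually_gt_atTop 0] with n hn
  have hn0 : (0 : ℝ) < n := Nat.cast_pos.mpr hn
  have hexp : (-(3 : ℝ) / 2) = -1 + -(1 : ℝ) / 2 := by norm_num
  rw [Pi.mul_apply, pow_one, ← lagrange_inversion hQ, PowerSeries.coeff_mk, hexp,
    Real.rpow_add hn0, Real.rpow_neg_one]
  field_simp
end

section
/- Let (p_k)_{k≥0} be a critical offspring distribution with span 1, variance σ² ∈ (0,∞), and ∑_{k≥0} k^{2+δ} p_k < ∞ for some δ ∈ (0,1]. Then there exist R > 1, θ ∈ (0,π/2), a constant C, and an analytic function Y on the Δ-domain Δ = {z ∈ ℂ : |z| < R, z ≠ 1, |arg(z−1)| > θ} such that Y(z) = ∑_{n≥1} q_n z^n for |z| < 1, and for all z ∈ Δ: |Y(z) − (1 − √2·σ^{-1}(1−z)^{1/2})| ≤ C|1−z|^{(1+δ)/2}, |Y′(z) − 2^{-1/2}σ^{-1}(1−z)^{-1/2}| ≤ C|1−z|^{(δ−1)/2},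 and |z·Y′(z)/Y(z) − 2^{-1/2}σ^{-1}(1−z)^{-1/2}| ≤ C|1−z|^{(δ−1)/2}. -/
/-- A Δ-domain: `{z : |z| < R, z ≠ 1, |arg(z−1)| > θ}`. -/
def deltaDom (R θ : ℝ) : Set ℂ :=
  {z : ℂ | ‖z‖ < R ∧ z ≠ 1 ∧ θ < |Complex.arg (z - 1)|}

/-!
With `s = σ²`, a critical generating function satisfies
`Φ w = w + (s / 2) (1 - w) ^ 2 + O(|1 - w| ^ (2 + δ))`, so the substitution
`z = 1 - (s / 2) (1 - ω) ^ 2` turns `ω` into an approximate fixed point of `w ↦ z * Φ w`, with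
defect `O(|1 - ω| ^ (2 + δ))`. It maps a Stolz region in `ω` onto a Δ-domain in `z`, and in Stolz
regions `|Φ' w| ≤ 1 - c |1 - w|`. Hence for `z` near `1` the map `w ↦ z * Φ w` contracts a disc
around `ω` of radius proportional to `|1 - ω|`, and dividing the defect by the gain `c |1 - ω|`
locates its fixed point up to `O(|1 - ω| ^ (1 + δ))`. Away from `1` the span condition gives
`|y z| < 1` on the closed unit disc, where `|Φ'| < 1`, so by compactness the fixed point persists
slightly beyond the unit circle. Uniqueness of fixed points of contractions patches the two
solutions into an analytic function, whose derivative is `Φ(Y) / (1 - z Φ'(Y))`.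
-/

open Asymptotics Filter Metric Topology

section PowerTaylor

variable {A : Type*} [NormedCommRing A] [NormOneClass A] {w : A}

theorem norm_pow_sub_sum_choose_le (hw : ‖w‖ ≤ 1) (k m : ℕ) :
    ‖w ^ k - ∑ i ∈ Finset.range m, (k.choose i : A) * (w - 1) ^ i‖
      ≤ k.choose m * ‖w - 1‖ ^ m := by
  induction k generalizing m with
  | zero => cases m <;> simp [Finset.sum_range_succ']
  | succ k ih =>
    cases m with
    | zero => simpa using (norm_pow_le w (k + 1)).trans (pow_le_one₀ (norm_nonneg w) hw)
    | succ m =>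
      have hpascal :
          w ^ (k + 1) - ∑ i ∈ Finset.range (m + 1), ((k + 1).choose i : A) * (w - 1) ^ i
            = (w ^ k - ∑ i ∈ Finset.range (m + 1), (k.choose i : A) * (w - 1) ^ i)
              + (w - 1) * (w ^ k - ∑ i ∈ Finset.range m, (k.choose i : A) * (w - 1) ^ i) := by
        simp only [Finset.sum_range_succ', Nat.choose_succ_succ', Nat.cast_add, add_mul,
          Finset.sum_add_distrib, mul_sub, Finset.mul_sum, pow_succ', Nat.choose_zero_right,
          mul_left_comm (w - 1)]
        ring
      calc _ ≤ k.choose (m + 1) * ‖w - 1‖ ^ (m + 1) + ‖w - 1‖ * (k.choose m * ‖w - 1‖ ^ m) := by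
            rw [hpascal]
            exact (norm_add_le _ _).trans (add_le_add (ih _) ((norm_mul_le _ _).trans
              (mul_le_mul_of_nonneg_left (ih _) (norm_nonneg _))))
        _ = _ := by push_cast [Nat.choose_succ_succ']; ring

theorem min_pow_le_rpow {x δ : ℝ} (hx : 0 ≤ x) (hδ0 : 0 ≤ δ) (hδ1 : δ ≤ 1) (m : ℕ) :
    min (x ^ m) (x ^ (m + 1)) ≤ x ^ (m + δ) := by
  rcases le_total x 1 with h | h
  · refine (min_le_right _ _).trans ?_
    rw [← Real.rpow_natCast]
    exact Real.rpow_le_rpow_of_exponent_ge' hx h (by positivity) (by push_cast; linarith)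
  · refine (min_le_left _ _).trans ?_
    rw [← Real.rpow_natCast]
    exact Real.rpow_le_rpow_of_exponent_le h (by linarith)

theorem norm_pow_sub_sum_choose_le_rpow (hw : ‖w‖ ≤ 1) {δ : ℝ} (hδ0 : 0 ≤ δ) (hδ1 : δ ≤ 1)
    (k m : ℕ) :
    ‖w ^ k - ∑ i ∈ Finset.range (m + 1), (k.choose i : A) * (w - 1) ^ i‖
      ≤ 2 * (k * ‖w - 1‖) ^ (m + δ) := by
  have hchoose (j : ℕ) : k.choose j * ‖w - 1‖ ^ j ≤ (k * ‖w - 1‖) ^ j := by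
    rw [mul_pow]
    gcongr
    exact_mod_cast Nat.choose_le_pow k j
  have hcoarse : ‖w ^ k - ∑ i ∈ Finset.range (m + 1), (k.choose i : A) * (w - 1) ^ i‖
      ≤ 2 * (k * ‖w - 1‖) ^ m := by
    have hlast : ‖(k.choose m : A) * (w - 1) ^ m‖ ≤ k.choose m * ‖w - 1‖ ^ m := by
      refine (norm_mul_le _ _).trans (mul_le_mul ?_ (norm_pow_le _ _) (norm_nonneg _) (by simp))
      simpa using Nat.norm_cast_le (α := A) (k.choose m)
    rw [Finset.sum_range_succ, ← sub_sub]
    linarith [norm_sub_le (w ^ k - ∑ i ∈ Finset.range m, (k.choose i : A) * (w - 1) ^ i)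
      ((k.choose m : A) * (w - 1) ^ m), norm_pow_sub_sum_choose_le hw k m, hchoose m]
  have hfine := (norm_pow_sub_sum_choose_le hw k (m + 1)).trans (hchoose (m + 1))
  have hx : 0 ≤ k * ‖w - 1‖ := by positivity
  calc _ ≤ 2 * min ((k * ‖w - 1‖) ^ m) ((k * ‖w - 1‖) ^ (m + 1)) := by
        rw [mul_min_of_nonneg _ _ zero_le_two]
        exact le_min hcoarse (hfine.trans (by linarith [pow_nonneg hx (m + 1)]))
    _ ≤ _ := by gcongr; exact min_pow_le_rpow hx hδ0 hδ1 m

end PowerTaylor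

/-- The probability generating function of `p`, as a function of a complex variable. -/
noncomputable def pgf (p : ℕ → ℝ) (w : ℂ) : ℂ := ∑' k, (p k : ℂ) * w ^ k

section PGF

variable {p : ℕ → ℝ} {w : ℂ}

theorem norm_coeff_mul_pow_le (hp : ∀ k, 0 ≤ p k) (hw : ‖w‖ ≤ 1) (k : ℕ) :
    ‖(p k : ℂ) * w ^ k‖ ≤ p k := by
  rw [norm_mul, Complex.norm_of_nonneg (hp k), norm_pow]
  exact mul_le_of_le_one_right (hp k) (pow_le_one₀ (norm_nonneg _) hw)

theorem hasSum_pgf (hp : ∀ k, 0 ≤ p k) (hs : Summable p) (hw : ‖w‖ ≤ 1) :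
    HasSum (fun k => (p k : ℂ) * w ^ k) (pgf p w) :=
  (hs.of_norm_bounded (norm_coeff_mul_pow_le hp hw)).hasSum

theorem pgf_ofReal (x : ℝ) : pgf p x = (∑' k, p k * x ^ k : ℝ) := by
  simp [pgf, Complex.ofReal_tsum]

theorem pgf_one (hs : HasSum p 1) : pgf p 1 = 1 := by
  simpa [hs.tsum_eq] using pgf_ofReal (p := p) 1

theorem norm_pgf_le_one (hp : ∀ k, 0 ≤ p k) (hs : HasSum p 1) (hw : ‖w‖ ≤ 1) :
    ‖pgf p w‖ ≤ 1 :=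
  tsum_of_norm_bounded hs (norm_coeff_mul_pow_le hp hw)

theorem norm_pgf_le_norm (hp : ∀ k, 0 ≤ p k) (hs : HasSum p 1) (hp0 : p 0 = 0) (hw : ‖w‖ ≤ 1) :
    ‖pgf p w‖ ≤ ‖w‖ := by
  refine tsum_of_norm_bounded (by simpa using hs.mul_right ‖w‖) fun k => ?_
  rcases k with _ | k
  · simp [hp0]
  · rw [pow_succ, ← mul_assoc, norm_mul, norm_mul, Complex.norm_of_nonneg (hp _), norm_pow]
    gcongr
    exact mul_le_of_le_one_right (hp _) (pow_le_one₀ (norm_nonneg _) hw)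

theorem continuousOn_pgf (hp : ∀ k, 0 ≤ p k) (hs : Summable p) :
    ContinuousOn (pgf p) (closedBall 0 1) :=
  continuousOn_tsum (fun k => by fun_prop) hs
    fun k _ hw => norm_coeff_mul_pow_le hp (mem_closedBall_zero_iff.1 hw) k

theorem differentiableOn_pgf (hp : ∀ k, 0 ≤ p k) (hs : Summable p) :
    DifferentiableOn ℂ (pgf p) (ball 0 1) :=
  Complex.differentiableOn_tsum_of_summable_norm hs (fun k => by fun_prop) isOpen_ball
    fun k _ hw => norm_coeff_mul_pow_le hp (mem_ball_zero_iff.1 hw).le k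

theorem norm_coeff_mul_deriv_pow (hp : ∀ k, 0 ≤ p k) (w : ℂ) (k : ℕ) :
    ‖(p k : ℂ) * (k * w ^ (k - 1))‖ = k * p k * ‖w‖ ^ (k - 1) := by
  rw [norm_mul, norm_mul, norm_pow, Complex.norm_of_nonneg (hp k), Complex.norm_natCast]
  ring

theorem coeff_mul_deriv_pow_le (hp : ∀ k, 0 ≤ p k) {x : ℝ} (hx0 : 0 ≤ x) (hx1 : x ≤ 1) (k : ℕ) :
    k * p k * x ^ (k - 1) ≤ k * p k :=
  mul_le_of_le_one_right (mul_nonneg k.cast_nonneg (hp k)) (pow_le_one₀ hx0 hx1)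

theorem hasDerivAt_pgf (hp : ∀ k, 0 ≤ p k) (hs : Summable p)
    (hmean : Summable fun k : ℕ => k * p k) (hw : ‖w‖ < 1) :
    HasDerivAt (pgf p) (∑' k : ℕ, (p k : ℂ) * (k * w ^ (k - 1))) w :=
  hasDerivAt_tsum_of_isPreconnected hmean isOpen_ball (convex_ball (0 : ℂ) 1).isPreconnected
    (fun k v _ => (hasDerivAt_pow k v).const_mul (p k : ℂ))
    (fun k v hv => (norm_coeff_mul_deriv_pow hp v k).trans_le
      (coeff_mul_deriv_pow_le hp (norm_nonneg v) (mem_ball_zero_iff.1 hv).le k))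
    (mem_ball_self one_pos) (hasSum_pgf hp hs (by simp)).summable (mem_ball_zero_iff.2 hw)

theorem norm_deriv_pgf_lt_one (hp : ∀ k, 0 ≤ p k) (hs : Summable p)
    (hmean : HasSum (fun k : ℕ => k * p k) 1) {j : ℕ} (hj : 2 ≤ j) (hpj : p j ≠ 0)
    (hw : ‖w‖ < 1) : ‖deriv (pgf p) w‖ < 1 := by
  have hle (k : ℕ) := coeff_mul_deriv_pow_le hp (norm_nonneg w) hw.le k
  have hsum : Summable fun k : ℕ => k * p k * ‖w‖ ^ (k - 1) :=
    hmean.summable.of_nonneg_of_le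
      (fun k => (norm_nonneg _).trans_eq (norm_coeff_mul_deriv_pow hp w k)) hle
  have hlt : j * p j * ‖w‖ ^ (j - 1) < j * p j :=
    mul_lt_of_lt_one_right (mul_pos (by positivity) ((hp j).lt_of_ne' hpj))
      (pow_lt_one₀ (norm_nonneg w) hw (by lia))
  calc ‖deriv (pgf p) w‖ ≤ ∑' k : ℕ, k * p k * ‖w‖ ^ (k - 1) := by
        rw [(hasDerivAt_pgf hp hs hmean.summable hw).deriv]
        exact tsum_of_norm_bounded hsum.hasSum fun k => (norm_coeff_mul_deriv_pow hp w k).le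
    _ < ∑' k : ℕ, k * p k := hsum.tsum_lt_tsum hle hlt hmean.summable
    _ = 1 := hmean.tsum_eq

theorem norm_pgf_sub_quadratic_le (hp : ∀ k, 0 ≤ p k) (hs : HasSum p 1)
    (hmean : HasSum (fun k : ℕ => k * p k) 1) {s M δ : ℝ}
    (hvar : HasSum (fun k : ℕ => (k : ℝ) * ((k : ℝ) - 1) * p k) s) (hδ0 : 0 ≤ δ) (hδ1 : δ ≤ 1)
    (hmom : HasSum (fun k : ℕ => (k : ℝ) ^ (2 + δ) * p k) M) (hw : ‖w‖ ≤ 1) :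
    ‖pgf p w - (w + s / 2 * (1 - w) ^ 2)‖ ≤ 2 * M * ‖1 - w‖ ^ (2 + δ) := by
  have hremainder : HasSum
      (fun k : ℕ => (p k : ℂ) *
        (w ^ k - ∑ i ∈ Finset.range 3, (k.choose i : ℂ) * (w - 1) ^ i))
      (pgf p w - (w + s / 2 * (1 - w) ^ 2)) := by
    have hterm (k : ℕ) :
        (p k : ℂ) * (w ^ k - ∑ i ∈ Finset.range 3, (k.choose i : ℂ) * (w - 1) ^ i) =
          p k * w ^ k - p k - ((k * p k : ℝ) : ℂ) * (w - 1) -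
            ((k * (k - 1) * p k : ℝ) : ℂ) * ((w - 1) ^ 2 / 2) := by
      simp only [Finset.sum_range_succ, Finset.range_zero, Finset.sum_empty, Nat.choose_zero_right,
        Nat.choose_one_right, Nat.cast_choose_two]
      push_cast
      ring
    have hvalue : pgf p w - (w + s / 2 * (1 - w) ^ 2) =
        pgf p w - (1 : ℝ) - (1 : ℝ) * (w - 1) - s * ((w - 1) ^ 2 / 2) := by
      push_cast
      ring
    rw [funext hterm, hvalue]
    exact (((hasSum_pgf hp hs.summable hw).sub (Complex.hasSum_ofReal.2 hs)).sub
      ((Complex.hasSum_ofReal.2 hmean).mul_right (w - 1))).sub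
      ((Complex.hasSum_ofReal.2 hvar).mul_right ((w - 1) ^ 2 / 2))
  rw [← hremainder.tsum_eq]
  refine tsum_of_norm_bounded (g := fun k : ℕ => 2 * ((k : ℝ) ^ (2 + δ) * p k) * ‖1 - w‖ ^ (2 + δ))
    ((hmom.mul_left 2).mul_right _) fun k => ?_
  rw [norm_mul, Complex.norm_of_nonneg (hp k)]
  calc _ ≤ p k * (2 * (k * ‖w - 1‖) ^ (((2 : ℕ) : ℝ) + δ)) :=
        mul_le_mul_of_nonneg_left (norm_pow_sub_sum_choose_le_rpow hw hδ0 hδ1 k 2) (hp k)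
    _ = _ := by
        rw [Real.mul_rpow (by positivity) (norm_nonneg _), norm_sub_rev]
        push_cast
        ring

end PGF

section Averages

variable {ι E : Type*} [NormedAddCommGroup E] [InnerProductSpace ℝ E]

theorem eq_of_hasSum_smul_of_norm_eq_one_s3 {p : ι → ℝ} {u : ι → E} {ζ : E} (hp : ∀ k, 0 ≤ p k)
    (hs : HasSum p 1) (hu : ∀ k, ‖u k‖ ≤ 1) (hζ : HasSum (fun k => p k • u k) ζ) (hζ1 : ‖ζ‖ = 1)
    {k : ι} (hk : p k ≠ 0) : u k = ζ := by
  have hinner (k : ι) : inner ℝ ζ (u k) ≤ 1 := by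
    simpa [hζ1] using (real_inner_le_norm ζ (u k)).trans
      (mul_le_mul_of_nonneg_left (hu k) (norm_nonneg ζ))
  have hsum : HasSum (fun k => p k * (1 - inner ℝ ζ (u k))) 0 := by
    simpa [hζ1, inner_smul_right, mul_sub] using hs.sub ((innerSL ℝ ζ).hasSum hζ)
  have hzero := congrFun ((hasSum_zero_iff_of_nonneg fun k =>
    mul_nonneg (hp k) (sub_nonneg.2 (hinner k))).1 hsum) k
  have hone : 1 - inner ℝ ζ (u k) = 0 := (mul_eq_zero.1 hzero).resolve_left hk
  have hdist : ‖u k - ζ‖ ^ 2 ≤ 0 := by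
    rw [norm_sub_sq_real, real_inner_comm, hζ1]
    nlinarith [hu k, norm_nonneg (u k)]
  exact sub_eq_zero.1 (norm_eq_zero.1 (pow_eq_zero_iff two_ne_zero |>.1
    (hdist.antisymm (sq_nonneg _))))

end Averages

section TreeEquation

variable {p q : ℕ → ℝ}

theorem eq_one_of_norm_pgf_eq_one (hp : ∀ k, 0 ≤ p k) (hs : HasSum p 1) (hp0 : p 0 ≠ 0)
    (hspan : ∀ d : ℕ, (∀ k, p k ≠ 0 → d ∣ k) → d = 1) {w : ℂ} (hw : ‖w‖ ≤ 1)
    (h : ‖pgf p w‖ = 1) : w = 1 := by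
  have hpow (k : ℕ) (hk : p k ≠ 0) : w ^ k = pgf p w :=
    eq_of_hasSum_smul_of_norm_eq_one_s3 hp hs
      (fun k => (norm_pow w k).trans_le (pow_le_one₀ (norm_nonneg w) hw))
      (by simpa only [Complex.real_smul] using hasSum_pgf hp hs.summable hw) h hk
  refine orderOf_eq_one_iff.1 (hspan _ fun k hk => orderOf_dvd_of_pow_eq_one ?_)
  rw [hpow k hk, ← hpow 0 hp0, pow_zero]

theorem exists_two_le_coeff_ne_zero
    (hvar : ∑' k : ℕ, (k : ℝ) * ((k : ℝ) - 1) * p k ≠ 0) : ∃ j, 2 ≤ j ∧ p j ≠ 0 := by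
  contrapose! hvar
  refine (tsum_congr fun k => ?_).trans tsum_zero
  rcases k with _ | _ | k
  · simp
  · simp
  · rw [hvar (k + 2) (by lia), mul_zero]

theorem coeff_zero_ne_zero (hp : ∀ k, 0 ≤ p k) (hs : HasSum p 1)
    (hmean : HasSum (fun k : ℕ => k * p k) 1) {j : ℕ} (hj : 2 ≤ j) (hpj : p j ≠ 0) :
    p 0 ≠ 0 := by
  intro hp0
  have hsum : HasSum (fun k : ℕ => ((k : ℝ) - 1) * p k) 0 := by
    simpa [sub_mul] using hmean.sub hs
  have hnonneg (k : ℕ) : 0 ≤ ((k : ℝ) - 1) * p k := by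
    rcases k with _ | k
    · simp [hp0]
    · exact mul_nonneg (by simp) (hp _)
  have hzero := congrFun ((hasSum_zero_iff_of_nonneg hnonneg).1 hsum) j
  have hj1 : (2 : ℝ) ≤ j := by exact_mod_cast hj
  exact hpj ((mul_eq_zero.1 hzero).resolve_left (by linarith))

theorem pgf_eq_mul_pgf_of_norm_lt_one (hp : ∀ k, 0 ≤ p k) (hs : Summable p)
    (hq : ∀ k, 0 ≤ q k) (hqs : HasSum q 1) (hq0 : q 0 = 0)
    (hfix : ∀ x ∈ Set.Ioo (0 : ℝ) 1, pgf q x = x * pgf p (pgf q x)) {z : ℂ} (hz : ‖z‖ < 1) :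
    pgf q z = z * pgf p (pgf q z) := by
  have hmaps : Set.MapsTo (pgf q) (ball 0 1) (ball 0 1) := fun w hw => by
    rw [mem_ball_zero_iff] at hw ⊢
    exact (norm_pgf_le_norm hq hqs hq0 hw.le).trans_lt hw
  have hlhs := differentiableOn_pgf hq hqs.summable
  have hrhs : DifferentiableOn ℂ (fun z => z * pgf p (pgf q z)) (ball 0 1) :=
    differentiableOn_id.mul ((differentiableOn_pgf hp hs).comp hlhs hmaps)
  have hcoe : Tendsto (fun x : ℝ => (x : ℂ)) (𝓝[>] 0) (𝓝[≠] 0) :=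
    tendsto_nhdsWithin_iff.2
      ⟨(Complex.continuous_ofReal.tendsto' 0 0 (by simp)).mono_left nhdsWithin_le_nhds,
        eventually_mem_nhdsWithin.mono fun x hx => by simpa using ne_of_gt hx⟩
  refine (hlhs.analyticOnNhd isOpen_ball).eqOn_of_preconnected_of_frequently_eq
    (hrhs.analyticOnNhd isOpen_ball) (convex_ball (0 : ℂ) 1).isPreconnected
    (mem_ball_self one_pos) (hcoe.frequently (Eventually.frequently ?_)) (mem_ball_zero_iff.2 hz)
  filter_upwards [Ioo_mem_nhdsGT one_pos] with x hx using hfix x hx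

theorem pgf_eq_mul_pgf (hp : ∀ k, 0 ≤ p k) (hs : Summable p) (hq : ∀ k, 0 ≤ q k)
    (hqs : HasSum q 1) (hq0 : q 0 = 0)
    (hfix : ∀ x ∈ Set.Ioo (0 : ℝ) 1, pgf q x = x * pgf p (pgf q x)) {z : ℂ} (hz : ‖z‖ ≤ 1) :
    pgf q z = z * pgf p (pgf q z) := by
  have hmaps : Set.MapsTo (pgf q) (closedBall 0 1) (closedBall 0 1) := fun w hw => by
    rw [mem_closedBall_zero_iff] at hw ⊢
    exact norm_pgf_le_one hq hqs hw
  have hlhs := continuousOn_pgf hq hqs.summable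
  have hrhs : ContinuousOn (fun z => z * pgf p (pgf q z)) (closedBall 0 1) :=
    continuousOn_id.mul ((continuousOn_pgf hp hs).comp hlhs hmaps)
  have heqOn : Set.EqOn (pgf q) (fun z => z * pgf p (pgf q z)) (ball 0 1) := fun w hw =>
    pgf_eq_mul_pgf_of_norm_lt_one hp hs hq hqs hq0 hfix (mem_ball_zero_iff.1 hw)
  exact heqOn.of_subset_closure hlhs hrhs ball_subset_closedBall
    (closure_ball 0 one_ne_zero).ge (mem_closedBall_zero_iff.2 hz)

theorem norm_pgf_lt_one (hp : ∀ k, 0 ≤ p k) (hs : HasSum p 1) (hp0 : p 0 ≠ 0)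
    (hspan : ∀ d : ℕ, (∀ k, p k ≠ 0 → d ∣ k) → d = 1) (hq : ∀ k, 0 ≤ q k) (hqs : HasSum q 1)
    {z : ℂ} (hfix : pgf q z = z * pgf p (pgf q z)) (hz : ‖z‖ ≤ 1) (hz1 : z ≠ 1) :
    ‖pgf q z‖ < 1 := by
  have hle := norm_pgf_le_one hq hqs hz
  refine hle.lt_of_ne fun hnorm => hz1 ?_
  have hΦ : ‖pgf p (pgf q z)‖ = 1 := by
    refine (norm_pgf_le_one hp hs hle).antisymm ?_
    rw [← hnorm]
    conv_lhs => rw [hfix, norm_mul]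
    exact mul_le_of_le_one_left (norm_nonneg _) hz
  have hone := eq_one_of_norm_pgf_eq_one hp hs hp0 hspan hle hΦ
  rwa [hone, pgf_one hs, mul_one, eq_comm] at hfix

end TreeEquation

section FixedPoint

variable {Φ : ℂ → ℂ} {S : Set ℂ} {a b z z₀ : ℂ} {κ r : ℝ}

theorem norm_mul_sub_mul_le (hS : Convex ℝ S) (hd : ∀ w ∈ S, DifferentiableAt ℂ Φ w)
    (hκ : ∀ w ∈ S, ‖z * deriv Φ w‖ ≤ κ) (ha : a ∈ S) (hb : b ∈ S) :
    ‖z * Φ a - z * Φ b‖ ≤ κ * ‖a - b‖ :=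
  hS.norm_image_sub_le_of_norm_deriv_le (f := fun w => z * Φ w)
    (fun w hw => (hd w hw).const_mul z)
    (fun w hw => by simpa only [deriv_const_mul_field] using hκ w hw) hb ha

theorem eq_of_eq_mul (hS : Convex ℝ S) (hd : ∀ w ∈ S, DifferentiableAt ℂ Φ w) (hκ1 : κ < 1)
    (hκ : ∀ w ∈ S, ‖z * deriv Φ w‖ ≤ κ) (ha : a ∈ S) (hb : b ∈ S) (hfa : a = z * Φ a)
    (hfb : b = z * Φ b) : a = b := by
  have hcontr : ‖a - b‖ ≤ κ * ‖a - b‖ := by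
    simpa only [← hfa, ← hfb] using norm_mul_sub_mul_le hS hd hκ ha hb
  refine eq_of_norm_sub_le_zero ?_
  nlinarith [norm_nonneg (a - b)]

theorem exists_mem_closedBall_eq_mul (hr : 0 ≤ r) (hκ1 : κ < 1)
    (hd : ∀ w ∈ closedBall a r, DifferentiableAt ℂ Φ w)
    (hκ : ∀ w ∈ closedBall a r, ‖z * deriv Φ w‖ ≤ κ) (ha : ‖z * Φ a - a‖ ≤ (1 - κ) * r) :
    ∃ w ∈ closedBall a r, w = z * Φ w := by
  have hmem : a ∈ closedBall a r := mem_closedBall_self hr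
  have hκ0 : 0 ≤ κ := (norm_nonneg _).trans (hκ a hmem)
  have hmaps : Set.MapsTo (fun w => z * Φ w) (closedBall a r) (closedBall a r) := fun w hw => by
    have hwa := norm_mul_sub_mul_le (convex_closedBall a r) hd hκ hw hmem
    rw [mem_closedBall_iff_norm] at hw ⊢
    calc ‖z * Φ w - a‖ ≤ ‖z * Φ w - z * Φ a‖ + ‖z * Φ a - a‖ := norm_sub_le_norm_sub_add_norm_sub ..
      _ ≤ κ * r + (1 - κ) * r := add_le_add (hwa.trans (by gcongr)) ha
      _ = r := by ring
  have hcontr : ContractingWith ⟨κ, hκ0⟩ (hmaps.restrict _ _ _) :=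
    ⟨by exact_mod_cast hκ1, LipschitzWith.of_dist_le_mul fun v w => by
      rw [Subtype.dist_eq, Subtype.dist_eq, dist_eq_norm, dist_eq_norm]
      exact norm_mul_sub_mul_le (convex_closedBall a r) hd hκ v.2 w.2⟩
  obtain ⟨w, hw, hfix, -⟩ := hcontr.exists_fixedPoint' isClosed_closedBall.isComplete hmaps hmem
    (edist_ne_top _ _)
  exact ⟨w, hw, hfix.symm⟩

theorem continuousAt_of_eq_mul (hS : Convex ℝ S) (hd : ∀ w ∈ S, DifferentiableAt ℂ Φ w)
    {B : ℝ} (hB : ∀ w ∈ S, ‖Φ w‖ ≤ B) (hκ1 : κ < 1) (hκ : ∀ w ∈ S, ‖z₀ * deriv Φ w‖ ≤ κ)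
    {Y : ℂ → ℂ} (hYS : ∀ᶠ z in 𝓝 z₀, Y z ∈ S) (hY : ∀ᶠ z in 𝓝 z₀, Y z = z * Φ (Y z)) :
    ContinuousAt Y z₀ := by
  have hbound : ∀ᶠ z in 𝓝 z₀, ‖Y z - Y z₀‖ ≤ B / (1 - κ) * ‖z - z₀‖ := by
    filter_upwards [hYS, hY] with z hzS hz
    have hsplit : Y z - Y z₀ = (z - z₀) * Φ (Y z) + (z₀ * Φ (Y z) - z₀ * Φ (Y z₀)) := by
      rw [sub_mul, ← hz, ← hY.self_of_nhds]
      ring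
    have hle : ‖Y z - Y z₀‖ ≤ ‖z - z₀‖ * B + κ * ‖Y z - Y z₀‖ :=
      calc ‖Y z - Y z₀‖ ≤ ‖(z - z₀) * Φ (Y z)‖ + ‖z₀ * Φ (Y z) - z₀ * Φ (Y z₀)‖ := by
            rw [hsplit]
            exact norm_add_le _ _
        _ ≤ ‖z - z₀‖ * B + κ * ‖Y z - Y z₀‖ := by
            rw [norm_mul]
            gcongr
            · exact hB _ hzS
            · exact norm_mul_sub_mul_le hS hd hκ hzS hYS.self_of_nhds
    rw [div_mul_eq_mul_div, le_div_iff₀ (by linarith)]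
    linarith
  have hlim : Tendsto (fun z => B / (1 - κ) * ‖z - z₀‖) (𝓝 z₀) (𝓝 0) :=
    Continuous.tendsto' (by fun_prop) _ _ (by simp)
  exact tendsto_iff_norm_sub_tendsto_zero.2
    (squeeze_zero' (Eventually.of_forall fun _ => norm_nonneg _) hbound hlim)

theorem hasDerivAt_of_eq_mul {Y : ℂ → ℂ} (hYc : ContinuousAt Y z₀)
    (hY : ∀ᶠ z in 𝓝 z₀, Y z = z * Φ (Y z)) (hΦ : DifferentiableAt ℂ Φ (Y z₀))
    (hne : z₀ * deriv Φ (Y z₀) ≠ 1) :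
    HasDerivAt Y (Φ (Y z₀) / (1 - z₀ * deriv Φ (Y z₀))) z₀ := by
  have hlim : Tendsto (fun z => 1 - z * dslope Φ (Y z₀) (Y z)) (𝓝 z₀)
      (𝓝 (1 - z₀ * deriv Φ (Y z₀))) := by
    have hcomp := ((continuousAt_dslope_same.2 hΦ).comp hYc).tendsto
    rw [Function.comp_apply, dslope_same] at hcomp
    exact tendsto_const_nhds.sub (tendsto_id.mul hcomp)
  have hne₀ : 1 - z₀ * deriv Φ (Y z₀) ≠ 0 := sub_ne_zero.2 hne.symm
  have hslope : ∀ᶠ z in 𝓝[≠] z₀, Φ (Y z₀) / (1 - z * dslope Φ (Y z₀) (Y z)) = slope Y z₀ z := by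
    filter_upwards [(hlim.eventually_ne hne₀).filter_mono nhdsWithin_le_nhds,
      hY.filter_mono nhdsWithin_le_nhds, self_mem_nhdsWithin] with z hz hfix hz₀
    have hsub := sub_smul_dslope Φ (Y z₀) (Y z)
    rw [smul_eq_mul] at hsub
    rw [slope_def_field, div_eq_div_iff hz (sub_ne_zero.2 hz₀)]
    linear_combination z * hsub - hfix + hY.self_of_nhds
  exact hasDerivAt_iff_tendsto_slope.2
    (((tendsto_const_nhds.div hlim hne₀).mono_left nhdsWithin_le_nhds).congr' hslope)

end FixedPoint

section NormPowers

variable {α E : Type*} [NormedAddCommGroup E] {l : Filter α} {f : α → E} {a b : ℝ}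

theorem isBigO_norm_rpow_rpow (hf : Tendsto f l (𝓝[≠] 0)) (hba : b ≤ a) :
    (fun x => ‖f x‖ ^ a) =O[l] fun x => ‖f x‖ ^ b := by
  have hnorm : Tendsto (fun x => ‖f x‖) l (𝓝[>] 0) := tendsto_norm_nhdsNE_zero.comp hf
  refine IsBigO.of_bound 1 ?_
  filter_upwards [hnorm.eventually (Ioc_mem_nhdsGT one_pos)] with x hx
  rw [one_mul, Real.norm_of_nonneg (by positivity), Real.norm_of_nonneg (by positivity)]
  exact Real.rpow_le_rpow_of_exponent_ge hx.1 hx.2 hba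

theorem isBigO_pow_norm_rpow {𝕜 : Type*} [NormedDivisionRing 𝕜] {g : α → 𝕜}
    (hg : Tendsto g l (𝓝[≠] 0)) {n : ℕ} (hbn : b ≤ n) :
    (fun x => g x ^ n) =O[l] fun x => ‖g x‖ ^ b := by
  refine IsBigO.of_norm_left ?_
  simpa only [norm_pow, Real.rpow_natCast] using isBigO_norm_rpow_rpow hg hbn

theorem isLittleO_norm_rpow_rpow (hf : Tendsto f l (𝓝[≠] 0)) (hba : b < a) :
    (fun x => ‖f x‖ ^ a) =o[l] fun x => ‖f x‖ ^ b := by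
  have hnorm : Tendsto (fun x => ‖f x‖) l (𝓝[>] 0) := tendsto_norm_nhdsNE_zero.comp hf
  have hsmall : (fun x => ‖f x‖ ^ (a - b)) =o[l] fun _ => (1 : ℝ) :=
    (isLittleO_one_iff ℝ).2 (((tendsto_nhdsWithin_iff.1 hnorm).1.rpow_const
      (Or.inr (sub_pos.2 hba).le)).trans_eq (by rw [Real.zero_rpow (sub_pos.2 hba).ne']))
  refine (hsmall.mul_isBigO (isBigO_refl (fun x => ‖f x‖ ^ b) l)).congr' ?_ (by simp)
  filter_upwards [hnorm.eventually self_mem_nhdsWithin] with x hx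
  rw [← Real.rpow_add hx, sub_add_cancel]

end NormPowers

section StolzSet

variable {M : ℝ} {w : ℂ}

theorem tendsto_one_sub_nhdsWithin_ball :
    Tendsto (fun w : ℂ => 1 - w) (𝓝[ball 0 1] 1) (𝓝[≠] 0) := by
  refine tendsto_nhdsWithin_iff.2 ⟨(Continuous.tendsto' (by fun_prop) _ _ (sub_self 1)).mono_left
    nhdsWithin_le_nhds, eventually_mem_nhdsWithin.mono fun w hw h => ?_⟩
  rw [mem_ball_zero_iff, ← sub_eq_zero.1 h, norm_one] at hw
  exact lt_irrefl 1 hw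

theorem nhdsWithin_stolzSet_le : 𝓝[Complex.stolzSet M] 1 ≤ 𝓝[ball 0 1] 1 :=
  nhdsWithin_mono _ fun _ hw => mem_ball_zero_iff.2 hw.1

theorem eventually_norm_one_sub_lt {S : Set ℂ} {ε : ℝ} (hε : 0 < ε) :
    ∀ᶠ w in 𝓝[S] 1, ‖1 - w‖ < ε := by
  filter_upwards [mem_nhdsWithin_of_mem_nhds (ball_mem_nhds (1 : ℂ) hε)] with w hw
  exact mem_ball_iff_norm'.1 hw

theorem one_lt_of_mem_stolzSet (hw : w ∈ Complex.stolzSet M) : 1 < M := by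
  by_contra! hM
  rw [Complex.stolzSet_empty hM] at hw
  exact hw

theorem stolzSet_mono : Monotone Complex.stolzSet := fun _ _ hMM' _ hw =>
  ⟨hw.1, hw.2.trans_le (mul_le_mul_of_nonneg_right hMM' (sub_pos.2 hw.1).le)⟩

theorem norm_one_sub_pos_of_mem_stolzSet (hw : w ∈ Complex.stolzSet M) : 0 < ‖1 - w‖ :=
  norm_pos_iff.2 (sub_ne_zero.2 fun h => by simpa [← h] using hw.1)

theorem norm_one_sub_mem_Icc (hM : 1 < M) {w' : ℂ}
    (hw' : w' ∈ closedBall w (‖1 - w‖ / (2 * M))) :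
    ‖1 - w'‖ ∈ Set.Icc (‖1 - w‖ / 2) (2 * ‖1 - w‖) := by
  have hradius : ‖1 - w‖ / (2 * M) ≤ ‖1 - w‖ / 2 := by
    gcongr
    linarith
  have hdist : ‖(1 - w) - (1 - w')‖ ≤ ‖1 - w‖ / 2 := by
    rw [sub_sub_sub_cancel_left]
    exact (mem_closedBall_iff_norm.1 hw').trans hradius
  have hlow := norm_sub_norm_le (1 - w) (1 - w')
  have hupp := norm_sub_norm_le (1 - w') (1 - w)
  rw [norm_sub_rev (1 - w')] at hupp
  constructor <;> linarith [norm_nonneg (1 - w)]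

theorem closedBall_subset_stolzSet (hw : w ∈ Complex.stolzSet M) :
    closedBall w (‖1 - w‖ / (2 * M)) ⊆ Complex.stolzSet (4 * M) := by
  intro w' hw'
  have hM : 0 < M := one_pos.trans (one_lt_of_mem_stolzSet hw)
  have hcomparable := (norm_one_sub_mem_Icc (one_lt_of_mem_stolzSet hw) hw').2
  have hw'norm : ‖w'‖ - ‖w‖ ≤ ‖1 - w‖ / (2 * M) :=
    (norm_sub_norm_le w' w).trans (mem_closedBall_iff_norm.1 hw')
  have hwnorm : ‖1 - w‖ / M < 1 - ‖w‖ := (div_lt_iff₀' hM).2 hw.2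
  have hhalf : ‖1 - w‖ / (2 * M) = ‖1 - w‖ / M / 2 := by field_simp
  have hgap : ‖1 - w‖ / M / 2 < 1 - ‖w'‖ := by linarith
  refine ⟨by linarith [div_nonneg (norm_nonneg (1 - w)) hM.le], hcomparable.trans_lt ?_⟩
  calc 2 * ‖1 - w‖ = 4 * M * (‖1 - w‖ / M / 2) := by field
    _ < 4 * M * (1 - ‖w'‖) := by gcongr

theorem norm_le_one_sub_of_mem_closedBall {w' : ℂ} (hw : w ∈ Complex.stolzSet M)
    (hw' : w' ∈ closedBall w (‖1 - w‖ / (2 * M))) : ‖w'‖ ≤ 1 - ‖1 - w‖ / (8 * M) := by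
  have hM := one_lt_of_mem_stolzSet hw
  have hlow := (norm_one_sub_mem_Icc hM hw').1
  have hcone := (closedBall_subset_stolzSet hw hw').2
  have hgap : ‖1 - w‖ / (8 * M) ≤ 1 - ‖w'‖ := by
    rw [div_le_iff₀ (by linarith)]
    linarith
  linarith

theorem eventually_forall_mem_closedBall_stolzSet {P : ℂ → Prop}
    (hP : ∀ᶠ w in 𝓝[Complex.stolzSet (4 * M)] 1, P w) :
    ∀ᶠ w in 𝓝[Complex.stolzSet M] 1, ∀ w' ∈ closedBall w (‖1 - w‖ / (2 * M)), P w' := by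
  obtain ⟨ε, hε, hP⟩ := mem_nhdsWithin_iff.1 hP
  refine mem_nhdsWithin_iff.2 ⟨ε / 2, half_pos hε, fun w ⟨hwε, hw⟩ w' hw' => hP ⟨?_, ?_⟩⟩
  · have hcomparable := (norm_one_sub_mem_Icc (one_lt_of_mem_stolzSet hw) hw').2
    rw [mem_ball_iff_norm'] at hwε ⊢
    linarith
  · exact closedBall_subset_stolzSet hw hw'

variable {α : Type*} {l : Filter α} {ω Y : α → ℂ}

theorem tendsto_stolzSet_of_mem_closedBall (hω : Tendsto ω l (𝓝[Complex.stolzSet M] 1))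
    (hY : ∀ᶠ x in l, Y x ∈ closedBall (ω x) (‖1 - ω x‖ / (2 * M))) :
    Tendsto Y l (𝓝[Complex.stolzSet (4 * M)] 1) := by
  have hωmem := hω.eventually self_mem_nhdsWithin
  have hlim : Tendsto (fun x => 2 * ‖1 - ω x‖) l (𝓝 0) := by
    have hcont : Continuous fun w : ℂ => 2 * ‖1 - w‖ := by fun_prop
    exact (hcont.tendsto' 1 0 (by simp)).comp (tendsto_nhdsWithin_iff.1 hω).1
  refine tendsto_nhdsWithin_iff.2 ⟨tendsto_iff_norm_sub_tendsto_zero.2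
    (squeeze_zero' (Eventually.of_forall fun _ => norm_nonneg _) ?_ hlim), ?_⟩
  · filter_upwards [hωmem, hY] with x hωx hYx
    rw [norm_sub_rev]
    exact (norm_one_sub_mem_Icc (one_lt_of_mem_stolzSet hωx) hYx).2
  · filter_upwards [hωmem, hY] with x hωx hYx using closedBall_subset_stolzSet hωx hYx

theorem one_sub_isBigO_of_mem_closedBall (hω : Tendsto ω l (𝓝[Complex.stolzSet M] 1))
    (hY : ∀ᶠ x in l, Y x ∈ closedBall (ω x) (‖1 - ω x‖ / (2 * M))) :
    (fun x => 1 - Y x) =O[l] fun x => 1 - ω x := by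
  refine IsBigO.of_bound 2 ?_
  filter_upwards [hω.eventually self_mem_nhdsWithin, hY] with x hωx hYx
  exact (norm_one_sub_mem_Icc (one_lt_of_mem_stolzSet hωx) hYx).2

theorem tendsto_one_sub (hω : Tendsto ω l (𝓝[Complex.stolzSet M] 1)) :
    Tendsto (fun x => 1 - ω x) l (𝓝[≠] 0) :=
  tendsto_one_sub_nhdsWithin_ball.comp (hω.mono_right nhdsWithin_stolzSet_le)

theorem deriv_isBigO_of_isBigO_norm_rpow {E : Type*} [NormedAddCommGroup E] [NormedSpace ℂ E]
    {f : ℂ → E} (hf : DifferentiableOn ℂ f (ball 0 1)) {β : ℝ} (hβ : 0 ≤ β)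
    (h : f =O[𝓝[ball 0 1] 1] fun w => ‖1 - w‖ ^ β) :
    deriv f =O[𝓝[Complex.stolzSet M] 1] fun w => ‖1 - w‖ ^ (β - 1) := by
  obtain ⟨C, hC0, hC⟩ := h.exists_nonneg
  refine IsBigO.of_bound (C * 2 ^ β * (2 * M)) ?_
  filter_upwards [eventually_forall_mem_closedBall_stolzSet
    (hC.bound.filter_mono nhdsWithin_stolzSet_le), self_mem_nhdsWithin] with w hbound hw
  have hM := one_lt_of_mem_stolzSet hw
  have hpos := norm_one_sub_pos_of_mem_stolzSet hw
  have hsub : closedBall w (‖1 - w‖ / (2 * M)) ⊆ ball 0 1 := fun w' hw' =>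
    mem_ball_zero_iff.2 (closedBall_subset_stolzSet hw hw').1
  have hsphere : ∀ w' ∈ sphere w (‖1 - w‖ / (2 * M)), ‖f w'‖ ≤ C * (2 * ‖1 - w‖) ^ β := by
    intro w' hw'
    have hcomparable := (norm_one_sub_mem_Icc hM (sphere_subset_closedBall hw')).2
    refine (hbound w' (sphere_subset_closedBall hw')).trans ?_
    rw [Real.norm_of_nonneg (by positivity)]
    gcongr
  calc ‖deriv f w‖ ≤ C * (2 * ‖1 - w‖) ^ β / (‖1 - w‖ / (2 * M)) :=
        Complex.norm_deriv_le_of_forall_mem_sphere_norm_le (by positivity)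
          (hf.diffContOnCl_ball hsub) hsphere
    _ = C * 2 ^ β * (2 * M) * ‖‖1 - w‖ ^ (β - 1)‖ := by
        rw [Real.mul_rpow two_pos.le hpos.le, Real.norm_of_nonneg (by positivity),
          Real.rpow_sub_one hpos.ne']
        field_simp

end StolzSet

/-- Generating functions of critical type with variance `s`: holomorphic functions on the unit disc,
bounded by one and with derivative of modulus less than one, which have at the boundary point `1`
the expansion `w + (s / 2) (1 - w) ^ 2 + O(‖1 - w‖ ^ (2 + δ))` of a critical probability generating
function with a moment of order `2 + δ`. -/
structure IsCriticalGF (Φ : ℂ → ℂ) (s δ : ℝ) : Prop where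
  variance_pos : 0 < s
  exponent_pos : 0 < δ
  exponent_le_one : δ ≤ 1
  differentiableOn : DifferentiableOn ℂ Φ (ball 0 1)
  norm_le_one : ∀ w ∈ ball (0 : ℂ) 1, ‖Φ w‖ ≤ 1
  norm_deriv_lt_one : ∀ w ∈ ball (0 : ℂ) 1, ‖deriv Φ w‖ < 1
  isBigO : (fun w => Φ w - (w + s / 2 * (1 - w) ^ 2)) =O[𝓝[ball 0 1] 1] fun w => ‖1 - w‖ ^ (2 + δ)

namespace IsCriticalGF

variable {Φ : ℂ → ℂ} {s δ M : ℝ}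

theorem differentiableAt (h : IsCriticalGF Φ s δ) {w : ℂ} (hw : ‖w‖ < 1) :
    DifferentiableAt ℂ Φ w :=
  h.differentiableOn.differentiableAt (isOpen_ball.mem_nhds (mem_ball_zero_iff.2 hw))

theorem sub_one_isBigO (h : IsCriticalGF Φ s δ) :
    (fun w => Φ w - 1) =O[𝓝[ball 0 1] 1] fun w => ‖1 - w‖ := by
  have hu := tendsto_one_sub_nhdsWithin_ball
  have hlinear : (fun w : ℂ => 1 - w) =O[𝓝[ball 0 1] 1] fun w => ‖1 - w‖ :=
    (isBigO_refl _ _).norm_right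
  have hsquare : (fun w : ℂ => (s / 2 : ℂ) * (1 - w) ^ 2) =O[𝓝[ball 0 1] 1] fun w => ‖1 - w‖ := by
    simpa only [Real.rpow_one] using
      (isBigO_pow_norm_rpow (b := 1) hu (by norm_num)).const_mul_left (s / 2 : ℂ)
  have hremainder : (fun w => Φ w - (w + s / 2 * (1 - w) ^ 2)) =O[𝓝[ball 0 1] 1]
      fun w => ‖1 - w‖ := by
    simpa only [Real.rpow_one] using
      h.isBigO.trans (isBigO_norm_rpow_rpow (b := 1) hu (by linarith [h.exponent_pos]))
  exact ((hremainder.add hsquare).sub hlinear).congr_left fun w => by ring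

theorem defect_isBigO (h : IsCriticalGF Φ s δ) :
    (fun w => (1 - s / 2 * (1 - w) ^ 2) * Φ w - w) =O[𝓝[ball 0 1] 1]
      fun w => ‖1 - w‖ ^ (2 + δ) := by
  have hu := tendsto_one_sub_nhdsWithin_ball
  have hcubic : (fun w => (s / 2 : ℂ) * ((1 - w) ^ 2 * (Φ w - 1))) =O[𝓝[ball 0 1] 1]
      fun w => ‖1 - w‖ ^ (2 + δ) := by
    have hlinear : (fun w => Φ w - 1) =O[𝓝[ball 0 1] 1] fun w => 1 - w :=
      h.sub_one_isBigO.of_norm_right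
    refine (((isBigO_refl _ _).mul hlinear).trans ?_).const_mul_left _
    simpa only [← pow_succ] using isBigO_pow_norm_rpow (n := 3) hu
      (by push_cast; linarith [h.exponent_le_one])
  exact (h.isBigO.sub hcubic).congr_left fun w => by ring

theorem deriv_sub_isBigO (h : IsCriticalGF Φ s δ) :
    (fun w => deriv Φ w - (1 - s * (1 - w))) =O[𝓝[Complex.stolzSet M] 1]
      fun w => ‖1 - w‖ ^ (1 + δ) := by
  have hquad (w : ℂ) : HasDerivAt (fun w : ℂ => w + s / 2 * (1 - w) ^ 2) (1 - s * (1 - w)) w := by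
    refine ((hasDerivAt_id w).add ((((hasDerivAt_id w).const_sub 1).pow 2).const_mul
      (s / 2 : ℂ))).congr_deriv ?_
    simp only [id, Nat.cast_ofNat]
    ring
  have hdiff : DifferentiableOn ℂ (fun w => Φ w - (w + s / 2 * (1 - w) ^ 2)) (ball 0 1) :=
    h.differentiableOn.sub fun w _ => (hquad w).differentiableAt.differentiableWithinAt
  have hderiv := deriv_isBigO_of_isBigO_norm_rpow (M := M) hdiff (by linarith [h.exponent_pos])
    h.isBigO
  refine hderiv.congr' ?_ (Eventually.of_forall fun w => by ring_nf)
  filter_upwards [self_mem_nhdsWithin] with w hw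
  exact ((h.differentiableAt hw.1).hasDerivAt.sub (hquad w)).deriv

end IsCriticalGF

theorem norm_one_sub_mul_le {u : ℂ} {s M : ℝ} (hs : 0 ≤ s) (hM : 1 ≤ M) (hu : ‖u‖ ≤ M * u.re)
    (hsmall : s * M * ‖u‖ ≤ 1) : ‖1 - s * u‖ ≤ 1 - s / (2 * M) * ‖u‖ := by
  have hM0 : 0 < M := by linarith
  have hre : ‖u‖ / M ≤ u.re := (div_le_iff₀' hM0).2 hu
  have hle : s / (2 * M) * ‖u‖ ≤ s * M * ‖u‖ := by
    gcongr
    exact (div_le_self hs (by linarith)).trans (le_mul_of_one_le_right hs hM)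
  refine abs_le_of_sq_le_sq' ?_ (by linarith) |>.2
  calc ‖1 - s * u‖ ^ 2 = 1 - 2 * s * u.re + s ^ 2 * ‖u‖ ^ 2 := by
        rw [Complex.sq_norm, Complex.sq_norm, Complex.normSq_apply, Complex.normSq_apply]
        simp only [Complex.sub_re, Complex.one_re, Complex.re_ofReal_mul, Complex.sub_im,
          Complex.one_im, Complex.im_ofReal_mul]
        ring
    _ ≤ 1 - 2 * s * (‖u‖ / M) + s * ‖u‖ / M := by
        have hquad : s ^ 2 * ‖u‖ ^ 2 ≤ s * ‖u‖ / M := by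
          rw [le_div_iff₀ hM0]
          nlinarith [mul_nonneg hs (norm_nonneg u)]
        gcongr
    _ ≤ (1 - s / (2 * M) * ‖u‖) ^ 2 := by
        have hexpand : (1 - s / (2 * M) * ‖u‖) ^ 2 =
            1 - 2 * s * (‖u‖ / M) + s * ‖u‖ / M + (s / (2 * M) * ‖u‖) ^ 2 := by field
        linarith [sq_nonneg (s / (2 * M) * ‖u‖)]

namespace IsCriticalGF

variable {Φ : ℂ → ℂ} {s δ M : ℝ}

theorem eventually_norm_deriv_le (h : IsCriticalGF Φ s δ) :
    ∀ᶠ w in 𝓝[Complex.stolzSet M] 1, ‖deriv Φ w‖ ≤ 1 - s / (4 * M) * ‖1 - w‖ := by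
  rcases le_or_gt M 1 with hM | hM
  · simp [Complex.stolzSet_empty hM]
  have hs := h.variance_pos
  have hM0 : 0 < M := one_pos.trans hM
  have hlittle : (fun w => deriv Φ w - (1 - s * (1 - w))) =o[𝓝[Complex.stolzSet M] 1]
      fun w => ‖1 - w‖ := by
    simpa only [Real.rpow_one] using h.deriv_sub_isBigO.trans_isLittleO
      (isLittleO_norm_rpow_rpow (b := 1)
        (tendsto_one_sub_nhdsWithin_ball.mono_left nhdsWithin_stolzSet_le)
        (by linarith [h.exponent_pos]))
  filter_upwards [eventually_norm_one_sub_lt (show 0 < 1 / (s * M) by positivity),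
    self_mem_nhdsWithin, hlittle.bound (show 0 < s / (4 * M) by positivity)]
    with w hsmall hw hremainder
  have hcone : ‖1 - w‖ ≤ M * (1 - w).re := by
    refine hw.2.le.trans ?_
    gcongr
    rw [Complex.sub_re, Complex.one_re]
    linarith [Complex.re_le_norm w]
  have hmodel := norm_one_sub_mul_le hs.le hM.le hcone ((lt_div_iff₀' (mul_pos hs hM0)).1 hsmall).le
  have hsplit : s / (2 * M) * ‖1 - w‖ = s / (4 * M) * ‖1 - w‖ + s / (4 * M) * ‖1 - w‖ := by field
  rw [norm_norm] at hremainder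
  linarith [norm_le_norm_add_norm_sub' (deriv Φ w) (1 - s * (1 - w))]

/-- Quadratically close to `1`, the multiplier `1 - (s / 2) (1 - ω) ^ 2` cannot compensate for the
linear gain in `‖deriv Φ‖`. -/
theorem eventually_norm_mul_deriv_le (h : IsCriticalGF Φ s δ) :
    ∀ᶠ ω in 𝓝[Complex.stolzSet M] 1, ∀ w ∈ closedBall ω (‖1 - ω‖ / (2 * M)),
      ‖(1 - s / 2 * (1 - ω) ^ 2) * deriv Φ w‖ ≤ 1 - s / (64 * M) * ‖1 - ω‖ := by
  rcases le_or_gt M 1 with hM | hM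
  · simp [Complex.stolzSet_empty hM]
  have hs := h.variance_pos
  have hM0 : 0 < M := one_pos.trans hM
  filter_upwards [eventually_forall_mem_closedBall_stolzSet h.eventually_norm_deriv_le,
    eventually_norm_one_sub_lt (one_div_pos.2 (mul_pos (by norm_num : (0 : ℝ) < 32) hM0))]
    with ω hderiv hsmall w hw
  have hmultiplier : ‖1 - s / 2 * (1 - ω) ^ 2‖ ≤ 1 + s / 2 * ‖1 - ω‖ ^ 2 :=
    (norm_sub_le _ _).trans_eq (by simp [abs_of_pos hs])
  have hgain : ‖deriv Φ w‖ ≤ 1 - s / (32 * M) * ‖1 - ω‖ := by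
    refine (hderiv w hw).trans ?_
    have hlow := (norm_one_sub_mem_Icc hM hw).1
    have hscale : s / (32 * M) * ‖1 - ω‖ = s / (4 * (4 * M)) * (‖1 - ω‖ / 2) := by field
    rw [hscale]
    gcongr
  have hloss : s / 2 * ‖1 - ω‖ ^ 2 ≤ s / (64 * M) * ‖1 - ω‖ := by
    have hscale : s / (64 * M) * ‖1 - ω‖ = s / 2 * ((1 / (32 * M)) * ‖1 - ω‖) := by field
    rw [hscale, sq]
    gcongr
  have hcross : 0 ≤ s / 2 * ‖1 - ω‖ ^ 2 * (s / (32 * M) * ‖1 - ω‖) := by positivity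
  calc ‖(1 - s / 2 * (1 - ω) ^ 2) * deriv Φ w‖
      ≤ (1 + s / 2 * ‖1 - ω‖ ^ 2) * (1 - s / (32 * M) * ‖1 - ω‖) := by
        rw [norm_mul]
        gcongr
    _ ≤ 1 + s / 2 * ‖1 - ω‖ ^ 2 - s / (32 * M) * ‖1 - ω‖ := by linarith
    _ ≤ 1 - s / (64 * M) * ‖1 - ω‖ := by
        have hscale : s / (32 * M) * ‖1 - ω‖ = 2 * (s / (64 * M) * ‖1 - ω‖) := by field
        linarith

theorem eventually_exists_eq_mul (h : IsCriticalGF Φ s δ) :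
    ∀ᶠ ω in 𝓝[Complex.stolzSet M] 1, ∃ w ∈ closedBall ω (‖1 - ω‖ / (4 * M)),
      w = (1 - s / 2 * (1 - ω) ^ 2) * Φ w := by
  rcases le_or_gt M 1 with hM | hM
  · simp [Complex.stolzSet_empty hM]
  have hs := h.variance_pos
  have hM0 : 0 < M := one_pos.trans hM
  have hdefect : (fun w => (1 - s / 2 * (1 - w) ^ 2) * Φ w - w) =o[𝓝[ball 0 1] 1]
      fun w => ‖1 - w‖ ^ (2 : ℝ) :=
    h.defect_isBigO.trans_isLittleO
      (isLittleO_norm_rpow_rpow tendsto_one_sub_nhdsWithin_ball (by linarith [h.exponent_pos]))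
  filter_upwards [h.eventually_norm_mul_deriv_le, self_mem_nhdsWithin,
    (hdefect.bound (show 0 < s / (64 * M) / (4 * M) by positivity)).filter_mono
      nhdsWithin_stolzSet_le] with ω hcontr hω hsmall
  have hradius : ‖1 - ω‖ / (4 * M) ≤ ‖1 - ω‖ / (2 * M) := by
    gcongr
    norm_num
  have hpos := norm_one_sub_pos_of_mem_stolzSet hω
  refine exists_mem_closedBall_eq_mul (κ := 1 - s / (64 * M) * ‖1 - ω‖)
    (div_nonneg hpos.le (mul_pos four_pos hM0).le)
    (sub_lt_self _ (by positivity))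
    (fun w hw => h.differentiableAt (closedBall_subset_stolzSet hω
      (closedBall_subset_closedBall hradius hw)).1)
    (fun w hw => hcontr w (closedBall_subset_closedBall hradius hw)) (hsmall.trans_eq ?_)
  rw [Real.rpow_two, norm_pow, norm_norm]
  field

variable {α : Type*} {l : Filter α} {ω Y : α → ℂ}

theorem fixedPoint_sub_isBigO (h : IsCriticalGF Φ s δ)
    (hω : Tendsto ω l (𝓝[Complex.stolzSet M] 1))
    (hY : ∀ᶠ x in l, Y x ∈ closedBall (ω x) (‖1 - ω x‖ / (2 * M)))
    (hfix : ∀ᶠ x in l, Y x = (1 - s / 2 * (1 - ω x) ^ 2) * Φ (Y x)) :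
    (fun x => Y x - ω x) =O[l] fun x => ‖1 - ω x‖ ^ (1 + δ) := by
  have hs := h.variance_pos
  have hscaled : (fun x => ‖1 - ω x‖ * ‖Y x - ω x‖) =O[l]
      fun x => (1 - s / 2 * (1 - ω x) ^ 2) * Φ (ω x) - ω x := by
    refine IsBigO.of_bound (64 * M / s) ?_
    filter_upwards [hω.eventually h.eventually_norm_mul_deriv_le,
      hω.eventually self_mem_nhdsWithin, hY, hfix] with x hcontr hωx hYx hfixx
    have hM := one_lt_of_mem_stolzSet hωx
    have hlip := norm_mul_sub_mul_le (convex_closedBall _ _)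
      (fun w hw => h.differentiableAt (closedBall_subset_stolzSet hωx hw).1) hcontr hYx
      (mem_closedBall_self (by positivity))
    rw [← hfixx] at hlip
    have htriangle := norm_sub_le_norm_sub_add_norm_sub (Y x)
      ((1 - s / 2 * (1 - ω x) ^ 2) * Φ (ω x)) (ω x)
    rw [norm_mul, norm_norm, norm_norm, div_mul_eq_mul_div, le_div_iff₀ hs]
    have hbound : s / (64 * M) * ‖1 - ω x‖ * ‖Y x - ω x‖ ≤
        ‖(1 - s / 2 * (1 - ω x) ^ 2) * Φ (ω x) - ω x‖ := by linarith
    rw [div_mul_eq_mul_div, div_mul_eq_mul_div, div_le_iff₀ (by positivity)] at hbound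
    linarith
  have hproduct : (fun x => ‖1 - ω x‖ * ‖Y x - ω x‖) =O[l]
      fun x => ‖1 - ω x‖ ^ (2 + δ) :=
    hscaled.trans (h.defect_isBigO.comp_tendsto (hω.mono_right nhdsWithin_stolzSet_le))
  have hpos := (tendsto_one_sub hω).eventually self_mem_nhdsWithin
  have hquotient := (isBigO_refl (fun x => ‖1 - ω x‖⁻¹) l).mul hproduct
  refine IsBigO.of_norm_left (hquotient.congr' ?_ ?_)
  · filter_upwards [hpos] with x hx
    exact inv_mul_cancel_left₀ (norm_ne_zero_iff.2 hx) _
  · filter_upwards [hpos] with x hx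
    rw [← Real.rpow_neg_one, ← Real.rpow_add (norm_pos_iff.2 hx)]
    ring_nf

theorem one_sub_mul_deriv_sub_isBigO (h : IsCriticalGF Φ s δ)
    (hω : Tendsto ω l (𝓝[Complex.stolzSet M] 1))
    (hY : ∀ᶠ x in l, Y x ∈ closedBall (ω x) (‖1 - ω x‖ / (2 * M)))
    (hfix : ∀ᶠ x in l, Y x = (1 - s / 2 * (1 - ω x) ^ 2) * Φ (Y x)) :
    (fun x => 1 - (1 - s / 2 * (1 - ω x) ^ 2) * deriv Φ (Y x) - s * (1 - ω x)) =O[l]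
      fun x => ‖1 - ω x‖ ^ (1 + δ) := by
  have hYlim := tendsto_stolzSet_of_mem_closedBall hω hY
  have hexpansion : (fun x => deriv Φ (Y x) - (1 - s * (1 - Y x))) =O[l]
      fun x => ‖1 - ω x‖ ^ (1 + δ) :=
    (h.deriv_sub_isBigO.comp_tendsto hYlim).trans
      ((one_sub_isBigO_of_mem_closedBall hω hY).norm_norm.rpow (by linarith [h.exponent_pos])
        (Eventually.of_forall fun _ => norm_nonneg _))
  have hshift := (h.fixedPoint_sub_isBigO hω hY hfix).const_mul_left (s : ℂ)
  have hbounded : (fun x => deriv Φ (Y x)) =O[l] fun _ => (1 : ℝ) := by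
    refine IsBigO.of_bound 1 ?_
    filter_upwards [hYlim.eventually self_mem_nhdsWithin] with x hx
    simpa using (h.norm_deriv_lt_one _ (mem_ball_zero_iff.2 hx.1)).le
  have hsquare : (fun x => (s / 2 : ℂ) * ((1 - ω x) ^ 2 * deriv Φ (Y x))) =O[l]
      fun x => ‖1 - ω x‖ ^ (1 + δ) := by
    simpa only [mul_one] using ((isBigO_pow_norm_rpow (n := 2) (tendsto_one_sub hω)
      (by push_cast; linarith [h.exponent_le_one])).mul hbounded).const_mul_left (s / 2 : ℂ)
  exact ((hsquare.sub hexpansion).sub hshift).congr_left fun x => by ring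

theorem eventually_le_norm_one_sub_mul_deriv (h : IsCriticalGF Φ s δ)
    (hω : Tendsto ω l (𝓝[Complex.stolzSet M] 1))
    (hY : ∀ᶠ x in l, Y x ∈ closedBall (ω x) (‖1 - ω x‖ / (2 * M))) :
    ∀ᶠ x in l, s / (64 * M) * ‖1 - ω x‖ ≤ ‖1 - (1 - s / 2 * (1 - ω x) ^ 2) * deriv Φ (Y x)‖ := by
  filter_upwards [hω.eventually h.eventually_norm_mul_deriv_le, hY] with x hcontr hYx
  have hlow := norm_sub_norm_le (1 : ℂ) ((1 - s / 2 * (1 - ω x) ^ 2) * deriv Φ (Y x))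
  rw [norm_one] at hlow
  linarith [hcontr _ hYx]

theorem inv_one_sub_mul_deriv_isBigO (h : IsCriticalGF Φ s δ)
    (hω : Tendsto ω l (𝓝[Complex.stolzSet M] 1))
    (hY : ∀ᶠ x in l, Y x ∈ closedBall (ω x) (‖1 - ω x‖ / (2 * M))) :
    (fun x => (1 - (1 - s / 2 * (1 - ω x) ^ 2) * deriv Φ (Y x))⁻¹) =O[l]
      fun x => ‖1 - ω x‖⁻¹ := by
  have hs := h.variance_pos
  refine IsBigO.of_bound (64 * M / s) ?_
  filter_upwards [h.eventually_le_norm_one_sub_mul_deriv hω hY,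
    hω.eventually self_mem_nhdsWithin] with x hlow hωx
  have hM : 0 < M := one_pos.trans (one_lt_of_mem_stolzSet hωx)
  have hpos := norm_one_sub_pos_of_mem_stolzSet hωx
  have hinv := inv_anti₀ (mul_pos (by positivity) hpos) hlow
  rwa [norm_inv, norm_inv, norm_norm, ← inv_div s, ← mul_inv]

theorem inv_one_sub_mul_deriv_sub_isBigO (h : IsCriticalGF Φ s δ)
    (hω : Tendsto ω l (𝓝[Complex.stolzSet M] 1))
    (hY : ∀ᶠ x in l, Y x ∈ closedBall (ω x) (‖1 - ω x‖ / (2 * M)))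
    (hfix : ∀ᶠ x in l, Y x = (1 - s / 2 * (1 - ω x) ^ 2) * Φ (Y x)) :
    (fun x => (1 - (1 - s / 2 * (1 - ω x) ^ 2) * deriv Φ (Y x))⁻¹ - (s * (1 - ω x))⁻¹) =O[l]
      fun x => ‖1 - ω x‖ ^ (δ - 1) := by
  have hs := h.variance_pos
  have hmodel : (fun x => (s * (1 - ω x) : ℂ)⁻¹) =O[l] fun x => ‖1 - ω x‖⁻¹ := by
    simpa only [mul_inv, norm_inv] using
      (isBigO_refl (fun x => (1 - ω x)⁻¹) l).norm_right.const_mul_left (s : ℂ)⁻¹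
  have hproduct := ((h.one_sub_mul_deriv_sub_isBigO hω hY hfix).mul
    (h.inv_one_sub_mul_deriv_isBigO hω hY)).mul hmodel
  refine hproduct.neg_left.congr' ?_ ?_
  · filter_upwards [h.eventually_le_norm_one_sub_mul_deriv hω hY,
      hω.eventually self_mem_nhdsWithin] with x hlow hωx
    have hM : 0 < M := one_pos.trans (one_lt_of_mem_stolzSet hωx)
    have hpos := norm_one_sub_pos_of_mem_stolzSet hωx
    have hne : 1 - (1 - s / 2 * (1 - ω x) ^ 2) * deriv Φ (Y x) ≠ 0 :=
      norm_pos_iff.1 ((mul_pos (by positivity) hpos).trans_le hlow)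
    rw [inv_sub_inv hne (mul_ne_zero (Complex.ofReal_ne_zero.2 hs.ne') (norm_pos_iff.1 hpos)),
      mul_assoc, ← mul_inv, ← div_eq_mul_inv, ← neg_div, neg_sub]
  · filter_upwards [(tendsto_one_sub hω).eventually self_mem_nhdsWithin] with x hx
    have hne := norm_ne_zero_iff.2 hx
    rw [mul_assoc, add_comm 1 δ, Real.rpow_add_one hne, Real.rpow_sub_one hne]
    field_simp

theorem fixedPoint_deriv_sub_isBigO (h : IsCriticalGF Φ s δ)
    (hω : Tendsto ω l (𝓝[Complex.stolzSet M] 1))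
    (hY : ∀ᶠ x in l, Y x ∈ closedBall (ω x) (‖1 - ω x‖ / (2 * M)))
    (hfix : ∀ᶠ x in l, Y x = (1 - s / 2 * (1 - ω x) ^ 2) * Φ (Y x)) :
    (fun x => Φ (Y x) / (1 - (1 - s / 2 * (1 - ω x) ^ 2) * deriv Φ (Y x)) -
      (s * (1 - ω x))⁻¹) =O[l] fun x => ‖1 - ω x‖ ^ (δ - 1) := by
  have hvalue : (fun x => Φ (Y x) - 1) =O[l] fun x => ‖1 - ω x‖ :=
    (h.sub_one_isBigO.comp_tendsto ((tendsto_stolzSet_of_mem_closedBall hω hY).mono_right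
      nhdsWithin_stolzSet_le)).trans (one_sub_isBigO_of_mem_closedBall hω hY).norm_norm
  have hbounded : (fun x => (Φ (Y x) - 1) *
      (1 - (1 - s / 2 * (1 - ω x) ^ 2) * deriv Φ (Y x))⁻¹) =O[l]
      fun x => ‖1 - ω x‖ ^ (δ - 1) := by
    refine (hvalue.mul (h.inv_one_sub_mul_deriv_isBigO hω hY)).trans ?_
    refine (isBigO_norm_rpow_rpow (a := 0) (tendsto_one_sub hω)
      (by linarith [h.exponent_le_one])).congr' ?_ EventuallyEq.rfl
    filter_upwards [(tendsto_one_sub hω).eventually self_mem_nhdsWithin] with x hx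
    rw [Real.rpow_zero, mul_inv_cancel₀ (norm_ne_zero_iff.2 hx)]
  exact (hbounded.add (h.inv_one_sub_mul_deriv_sub_isBigO hω hY hfix)).congr_left fun x => by ring

end IsCriticalGF

section DeltaDomain

variable {R θ : ℝ} {z : ℂ}

theorem mem_deltaDom_iff (hθ : θ ∈ Set.Icc 0 Real.pi) :
    z ∈ deltaDom R θ ↔ ‖z‖ < R ∧ -(Real.cos θ * ‖1 - z‖) < (1 - z).re := by
  refine and_congr_right fun _ => ?_
  rcases eq_or_ne z 1 with rfl | hz
  · simp
  have hpos : 0 < ‖z - 1‖ := norm_pos_iff.2 (sub_ne_zero.2 hz)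
  rw [and_iff_right hz, ← Real.strictAntiOn_cos.lt_iff_gt
    ⟨abs_nonneg _, Complex.abs_arg_le_pi _⟩ hθ, Real.cos_abs, neg_lt, ← Complex.neg_re, neg_sub,
    norm_sub_rev 1 z, ← Complex.norm_mul_cos_arg (z - 1), mul_comm (Real.cos θ),
    mul_lt_mul_iff_right₀ hpos]

theorem isOpen_deltaDom (hθ : θ ∈ Set.Icc 0 Real.pi) : IsOpen (deltaDom R θ) := by
  have hset : deltaDom R θ = {z | ‖z‖ < R ∧ -(Real.cos θ * ‖1 - z‖) < (1 - z).re} :=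
    Set.ext fun _ => mem_deltaDom_iff hθ
  rw [hset]
  exact IsOpen.and (isOpen_lt (by fun_prop) (by fun_prop)) (isOpen_lt (by fun_prop) (by fun_prop))

theorem ball_subset_deltaDom (hR : 1 ≤ R) (hθ : θ ∈ Set.Icc 0 (Real.pi / 2)) :
    ball 0 1 ⊆ deltaDom R θ := by
  intro z hz
  rw [mem_ball_zero_iff] at hz
  have hcos : 0 ≤ Real.cos θ := Real.cos_nonneg_of_neg_pi_div_two_le_of_le
    (by linarith [hθ.1, Real.pi_pos]) hθ.2
  refine (mem_deltaDom_iff ⟨hθ.1, by linarith [hθ.2, Real.pi_pos]⟩).2 ⟨hz.trans_le hR, ?_⟩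
  rw [Complex.sub_re, Complex.one_re]
  linarith [mul_nonneg hcos (norm_nonneg (1 - z)), Complex.re_le_norm z]

theorem one_sub_mem_slitPlane (hθ : θ ∈ Set.Icc 0 Real.pi) (hz : z ∈ deltaDom R θ) :
    1 - z ∈ Complex.slitPlane := by
  have hre := ((mem_deltaDom_iff hθ).1 hz).2
  refine Complex.mem_slitPlane_iff.2 (or_iff_not_imp_left.2 fun hneg him => ?_)
  rw [← Complex.abs_re_eq_norm.2 him, abs_of_nonpos (not_lt.1 hneg)] at hre
  nlinarith [Real.cos_le_one θ, not_lt.1 hneg]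

theorem abs_im_lt_mul_re_cpow_inv_two {u : ℂ} {κ : ℝ} (hκ : κ < 1) (hu : -(κ * ‖u‖) < u.re) :
    |(u ^ (2⁻¹ : ℂ)).im| < √((1 + κ) / (1 - κ)) * (u ^ (2⁻¹ : ℂ)).re := by
  have hκ0 : 0 < 1 - κ := sub_pos.2 hκ
  have hsum : 0 < ‖u‖ + u.re := by
    nlinarith [norm_nonneg u]
  rw [Complex.abs_cpow_inv_two_im, Complex.cpow_inv_two_re,
    ← Real.sqrt_mul' _ (half_pos hsum).le]
  refine Real.sqrt_lt_sqrt (by linarith [Complex.re_le_norm u]) ?_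
  rw [div_mul_div_comm, div_lt_div_iff₀ two_pos (mul_pos hκ0 two_pos)]
  linarith

/-- The leading part `1 - √2 σ⁻¹ (1 - z) ^ (1 / 2)`, `s = σ²`, of the tree-size generating function
at its singularity `1`; it inverts `w ↦ 1 - (s / 2) (1 - w) ^ 2`. -/
noncomputable def sqrtApprox (s : ℝ) (z : ℂ) : ℂ :=
  1 - ((√2 / √s : ℝ) : ℂ) * (1 - z) ^ (2⁻¹ : ℂ)

variable {s : ℝ}

theorem one_sub_sqrtApprox (s : ℝ) (z : ℂ) :
    1 - sqrtApprox s z = ((√2 / √s : ℝ) : ℂ) * (1 - z) ^ (2⁻¹ : ℂ) :=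
  sub_sub_cancel _ _

theorem one_sub_mul_sq_sqrtApprox (hs : 0 < s) (z : ℂ) :
    1 - s / 2 * (1 - sqrtApprox s z) ^ 2 = z := by
  have hcoeff : (s : ℂ) * ((√2 / √s : ℝ) : ℂ) ^ 2 = 2 := by
    rw [← Complex.ofReal_pow, div_pow, Real.sq_sqrt two_pos.le, Real.sq_sqrt hs.le,
      ← Complex.ofReal_mul, mul_div_cancel₀ _ hs.ne', Complex.ofReal_ofNat]
  have hsq : ((1 - z) ^ (2⁻¹ : ℂ)) ^ 2 = 1 - z := by
    exact_mod_cast Complex.cpow_nat_inv_pow (1 - z) two_ne_zero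
  rw [one_sub_sqrtApprox, mul_pow, hsq]
  linear_combination (-(1 - z) / 2) * hcoeff

theorem norm_one_sub_sqrtApprox (s : ℝ) (z : ℂ) :
    ‖1 - sqrtApprox s z‖ = √2 / √s * ‖1 - z‖ ^ (2⁻¹ : ℝ) := by
  have hexponent : (2⁻¹ : ℂ) = ((2⁻¹ : ℝ) : ℂ) := by push_cast; rfl
  rw [one_sub_sqrtApprox, norm_mul, Complex.norm_real, Real.norm_of_nonneg (by positivity),
    hexponent, Complex.norm_cpow_real]

theorem norm_one_sub_sqrtApprox_rpow (s : ℝ) (z : ℂ) (β : ℝ) :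
    ‖1 - sqrtApprox s z‖ ^ β = (√2 / √s) ^ β * ‖1 - z‖ ^ (β / 2) := by
  rw [norm_one_sub_sqrtApprox, Real.mul_rpow (by positivity) (by positivity),
    ← Real.rpow_mul (norm_nonneg _), mul_comm 2⁻¹, ← div_eq_mul_inv]

theorem inv_mul_one_sub_sqrtApprox (s : ℝ) (z : ℂ) :
    (s * (1 - sqrtApprox s z))⁻¹ = (((√2)⁻¹ / √s : ℝ) : ℂ) * (1 - z) ^ (-2⁻¹ : ℂ) := by
  have hcoeff : (√2)⁻¹ / √s = (s * (√2 / √s))⁻¹ := by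
    rw [mul_div_left_comm, Real.div_sqrt, mul_inv, div_eq_mul_inv]
  rw [one_sub_sqrtApprox, hcoeff, Complex.cpow_neg, ← mul_assoc, mul_inv]
  push_cast
  rfl

theorem continuousAt_sqrtApprox (hz : 1 - z ∈ Complex.slitPlane ∨ z = 1) :
    ContinuousAt (sqrtApprox s) z := by
  refine continuousAt_const.sub (continuousAt_const.mul
    ((Complex.continuousAt_cpow_const_of_re_pos (w := 2⁻¹) ?_ (by norm_num)).comp
      (f := fun z : ℂ => 1 - z) (by fun_prop)))
  rcases hz with hz | rfl
  · exact (Complex.mem_slitPlane_iff.1 hz).imp_left le_of_lt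
  · simp

theorem continuousOn_sqrtApprox (hθ : θ ∈ Set.Icc 0 Real.pi) :
    ContinuousOn (sqrtApprox s) (deltaDom R θ) := fun _ hz =>
  (continuousAt_sqrtApprox (Or.inl (one_sub_mem_slitPlane hθ hz))).continuousWithinAt

theorem sqrtApprox_mem_stolzCone (hs : 0 < s) (hθ : θ ∈ Set.Ioc 0 Real.pi)
    (hz : z ∈ deltaDom R θ) :
    sqrtApprox s z ∈ Complex.stolzCone √((1 + Real.cos θ) / (1 - Real.cos θ)) := by
  have hcos : Real.cos θ < 1 := by
    simpa using Real.cos_lt_cos_of_nonneg_of_le_pi le_rfl hθ.2 hθ.1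
  have hcone := abs_im_lt_mul_re_cpow_inv_two hcos ((mem_deltaDom_iff ⟨hθ.1.le, hθ.2⟩).1 hz).2
  have hcoeff : 0 < √2 / √s := by positivity
  rw [sqrtApprox, Complex.stolzCone, Set.mem_ofPred_eq, Complex.sub_im, Complex.one_im, zero_sub,
    abs_neg, Complex.im_ofReal_mul, abs_mul, abs_of_pos hcoeff, Complex.sub_re, Complex.one_re,
    Complex.re_ofReal_mul, sub_sub_cancel, mul_left_comm]
  gcongr

theorem exists_tendsto_sqrtApprox_stolzSet (hs : 0 < s) (hθ : θ ∈ Set.Ioo 0 Real.pi) :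
    ∃ M > 1, ∀ R, Tendsto (sqrtApprox s) (𝓝[deltaDom R θ] 1) (𝓝[Complex.stolzSet M] 1) := by
  have hcos : -1 < Real.cos θ ∧ Real.cos θ < 1 := by
    constructor
    · simpa using Real.cos_lt_cos_of_nonneg_of_le_pi hθ.1.le le_rfl hθ.2
    · simpa using Real.cos_lt_cos_of_nonneg_of_le_pi le_rfl hθ.2.le hθ.1
  obtain ⟨M, hM⟩ := Complex.nhdsWithin_stolzCone_le_nhdsWithin_stolzSet
    (Real.sqrt_pos.2 (div_pos (neg_lt_iff_pos_add'.1 hcos.1) (sub_pos.2 hcos.2)))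
  have hone : sqrtApprox s 1 = 1 := by simp [sqrtApprox]
  refine ⟨max M 2, one_lt_two.trans_le (le_max_right M 2), fun R =>
    Tendsto.mono_right (tendsto_nhdsWithin_iff.2 ⟨?_, ?_⟩)
      (hM.trans (nhdsWithin_mono 1 (stolzSet_mono (le_max_left M 2))))⟩
  · simpa only [hone] using
      (continuousAt_sqrtApprox (s := s) (Or.inr rfl)).tendsto.mono_left nhdsWithin_le_nhds
  · filter_upwards [self_mem_nhdsWithin] with z hz
    exact sqrtApprox_mem_stolzCone hs ⟨hθ.1, hθ.2.le⟩ hz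

end DeltaDomain

theorem exists_lt_forall_le_of_isCompact {X : Type*} [TopologicalSpace X] {K : Set X} {f : X → ℝ}
    {b : ℝ} (hK : IsCompact K) (hf : ContinuousOn f K) (hb : ∀ x ∈ K, f x < b) :
    ∃ b' < b, ∀ x ∈ K, f x ≤ b' :=
  hK.exists_forall_le' (α := ℝᵒᵈ) hf hb

theorem eventually_norm_le_of_le_norm_one_sub {y : ℂ → ℂ} {ε : ℝ}
    (hyc : ContinuousOn y (closedBall 0 1))
    (hy1 : ∀ z ∈ closedBall (0 : ℂ) 1, z ≠ 1 → ‖y z‖ < 1) (hε : 0 < ε) :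
    ∀ᶠ ρ in 𝓝[<] 1, ∀ z ∈ closedBall (0 : ℂ) 1, ε ≤ ‖1 - z‖ → ‖y z‖ ≤ ρ := by
  have hcompact : IsCompact (closedBall (0 : ℂ) 1 ∩ {z | ε ≤ ‖1 - z‖}) :=
    (isCompact_closedBall 0 1).inter_right (isClosed_le (by fun_prop) (by fun_prop))
  obtain ⟨ρ₀, hρ₀, hbound⟩ := exists_lt_forall_le_of_isCompact hcompact
    (hyc.mono Set.inter_subset_left).norm fun z hz => hy1 z hz.1 fun h => by
      simpa [h] using hε.trans_le hz.2
  filter_upwards [Ioo_mem_nhdsLT hρ₀] with ρ hρ z hz hεz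
  exact (hbound z ⟨hz, hεz⟩).trans hρ.1.le

namespace IsCriticalGF

variable {Φ y : ℂ → ℂ} {s δ ε ρ : ℝ}

theorem exists_eventually_norm_mul_deriv_le (h : IsCriticalGF Φ s δ) (hρ : ρ < 1) :
    ∃ κ < 1, ∀ᶠ R in 𝓝[>] (1 : ℝ), ∀ z ∈ ball (0 : ℂ) R, ∀ w ∈ closedBall (0 : ℂ) ρ,
      ‖z * deriv Φ w‖ ≤ κ := by
  have hsub : closedBall (0 : ℂ) ρ ⊆ ball 0 1 := closedBall_subset_ball hρ
  obtain ⟨κ, hκ1, hκ⟩ := exists_lt_forall_le_of_isCompact (isCompact_closedBall (0 : ℂ) ρ)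
    ((h.differentiableOn.deriv isOpen_ball).continuousOn.mono hsub).norm
    fun w hw => h.norm_deriv_lt_one w (hsub hw)
  obtain ⟨κ', hκκ', hκ'1⟩ := exists_between (max_lt hκ1 zero_lt_one)
  have hlim : Tendsto (fun R => R * max κ 0) (𝓝[>] 1) (𝓝 (max κ 0)) :=
    (Continuous.tendsto' (f := fun R => R * max κ 0) (by fun_prop) 1 _ (one_mul _)).mono_left
      nhdsWithin_le_nhds
  refine ⟨κ', hκ'1, ?_⟩
  filter_upwards [hlim.eventually_le_const hκκ'] with R hR z hz w hw
  rw [mem_ball_zero_iff] at hz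
  rw [norm_mul]
  refine (mul_le_mul hz.le ((hκ w hw).trans (le_max_left κ 0)) (norm_nonneg _) ?_).trans hR
  exact (norm_nonneg z).trans hz.le

theorem eventually_eventually_exists_eq_mul (h : IsCriticalGF Φ s δ)
    (hyc : ContinuousOn y (closedBall 0 1))
    (hy1 : ∀ z ∈ closedBall (0 : ℂ) 1, z ≠ 1 → ‖y z‖ < 1)
    (hfix : ∀ z ∈ closedBall (0 : ℂ) 1, y z = z * Φ (y z)) (hε : 0 < ε) :
    ∀ᶠ ρ in 𝓝[<] 1, ∀ᶠ R in 𝓝[>] (1 : ℝ), ∀ z ∈ ball (0 : ℂ) R, ε ≤ ‖1 - z‖ →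
      ∃ w ∈ closedBall (0 : ℂ) ρ, w = z * Φ w := by
  obtain ⟨ρ₀, hbound, hρ₀⟩ := ((eventually_norm_le_of_le_norm_one_sub hyc hy1 (half_pos hε)).and
    self_mem_nhdsWithin).exists
  filter_upwards [Ioo_mem_nhdsLT hρ₀] with ρ hρ
  obtain ⟨κ, hκ1, hκ⟩ := h.exists_eventually_norm_mul_deriv_le hρ.2
  have hr : 0 < ρ - ρ₀ := sub_pos.2 hρ.1
  have hsmall (c : ℝ) (hc : 0 < c) : ∀ᶠ R in 𝓝[>] (1 : ℝ), R - 1 < c := by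
    filter_upwards [Ioo_mem_nhdsGT (lt_add_of_pos_right 1 hc)] with R hR
    exact sub_left_lt_of_lt_add hR.2
  filter_upwards [hκ, self_mem_nhdsWithin, hsmall _ (half_pos hε),
    hsmall _ (mul_pos (sub_pos.2 hκ1) hr)] with R hκR hR hRε hRκ z hz hεz
  obtain ⟨z₁, hz₁, hdist⟩ : ∃ z₁ ∈ closedBall (0 : ℂ) 1, dist z z₁ < R - 1 := by
    rwa [← mem_thickening_iff, thickening_closedBall (sub_pos.2 hR) zero_le_one, sub_add_cancel]
  rw [dist_eq_norm] at hdist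
  have hεz₁ : ε / 2 ≤ ‖1 - z₁‖ := by
    linarith [norm_sub_le_norm_sub_add_norm_sub 1 z₁ z, norm_sub_rev z z₁]
  have hyz₁ := hbound z₁ hz₁ hεz₁
  have hball : closedBall (y z₁) (ρ - ρ₀) ⊆ closedBall 0 ρ :=
    closedBall_subset_closedBall' (by rw [dist_zero_right]; linarith)
  obtain ⟨w, hw, hwfix⟩ := exists_mem_closedBall_eq_mul hr.le hκ1
    (fun w hw => h.differentiableAt ((mem_closedBall_zero_iff.1 (hball hw)).trans_lt hρ.2))
    (fun w hw => hκR z hz w (hball hw)) (calc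
      ‖z * Φ (y z₁) - y z₁‖ = ‖z - z₁‖ * ‖Φ (y z₁)‖ := by
        rw [← norm_mul, sub_mul, ← hfix z₁ hz₁]
      _ ≤ ‖z - z₁‖ * 1 := by
        gcongr
        exact h.norm_le_one _ (mem_ball_zero_iff.2 (hyz₁.trans_lt hρ₀))
      _ ≤ (1 - κ) * (ρ - ρ₀) := by linarith)
  exact ⟨w, hball hw, hwfix⟩

end IsCriticalGF

/-- `Y` is a solution on `D` of the tree equation `Y z = z * Φ (Y z)` which, locally around each
point `z` of `D`, stays in a convex part of the unit disc on which `w ↦ z * Φ w` contracts by the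
factor `κ z`. -/
structure IsContractiveBranch (Φ : ℂ → ℂ) (D : Set ℂ) (κ : ℂ → ℝ) (Y : ℂ → ℂ) : Prop where
  eq_mul : ∀ z ∈ D, Y z = z * Φ (Y z)
  exists_convex : ∀ z₀ ∈ D, ∃ S ⊆ ball (0 : ℂ) 1, Convex ℝ S ∧
    (∀ w ∈ S, ‖z₀ * deriv Φ w‖ ≤ κ z₀) ∧ ∀ᶠ z in 𝓝 z₀, Y z ∈ S

namespace IsContractiveBranch

variable {Φ Y y : ℂ → ℂ} {D : Set ℂ} {κ : ℂ → ℝ} {z : ℂ} {s δ c : ℝ}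

theorem mem_ball (h : IsContractiveBranch Φ D κ Y) (hz : z ∈ D) : Y z ∈ ball 0 1 := by
  obtain ⟨S, hS, -, -, hYS⟩ := h.exists_convex z hz
  exact hS hYS.self_of_nhds

theorem norm_mul_deriv_le (h : IsContractiveBranch Φ D κ Y) (hz : z ∈ D) :
    ‖z * deriv Φ (Y z)‖ ≤ κ z := by
  obtain ⟨S, -, -, hκ, hYS⟩ := h.exists_convex z hz
  exact hκ _ hYS.self_of_nhds

theorem one_sub_le_norm (h : IsContractiveBranch Φ D κ Y) (hz : z ∈ D) :
    1 - κ z ≤ ‖1 - z * deriv Φ (Y z)‖ := by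
  have hlow := norm_sub_norm_le 1 (z * deriv Φ (Y z))
  rw [norm_one] at hlow
  linarith [h.norm_mul_deriv_le hz]

theorem hasDerivAt (h : IsContractiveBranch Φ D κ Y) (hD : IsOpen D)
    (hΦ : DifferentiableOn ℂ Φ (ball 0 1)) (hΦ1 : ∀ w ∈ ball (0 : ℂ) 1, ‖Φ w‖ ≤ 1) (hz : z ∈ D)
    (hκ : κ z < 1) : HasDerivAt Y (Φ (Y z) / (1 - z * deriv Φ (Y z))) z := by
  obtain ⟨S, hS, hconvex, hcontr, hYS⟩ := h.exists_convex z hz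
  have hfix : ∀ᶠ z' in 𝓝 z, Y z' = z' * Φ (Y z') :=
    eventually_of_mem (hD.mem_nhds hz) h.eq_mul
  have hdiff (w : ℂ) (hw : w ∈ ball 0 1) : DifferentiableAt ℂ Φ w :=
    hΦ.differentiableAt (isOpen_ball.mem_nhds hw)
  have hcont := continuousAt_of_eq_mul hconvex (fun w hw => hdiff w (hS hw))
    (fun w hw => hΦ1 w (hS hw)) hκ hcontr hYS hfix
  refine hasDerivAt_of_eq_mul hcont hfix (hdiff _ (h.mem_ball hz)) fun hone => ?_
  have hle := h.norm_mul_deriv_le hz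
  rw [hone, norm_one] at hle
  exact hκ.not_ge hle

theorem eqOn_ball (h : IsContractiveBranch Φ D κ Y) (hΦ : IsCriticalGF Φ s δ)
    (hD : ball 0 1 ⊆ D) (hy : ∀ z ∈ ball (0 : ℂ) 1, ‖y z‖ < 1)
    (hfix : ∀ z ∈ ball (0 : ℂ) 1, y z = z * Φ (y z)) : Set.EqOn Y y (ball 0 1) := by
  intro z hz
  have hz1 := mem_ball_zero_iff.1 hz
  refine eq_of_eq_mul (convex_ball 0 1)
    (fun w hw => hΦ.differentiableAt (mem_ball_zero_iff.1 hw)) hz1 (fun w hw => ?_)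
    (h.mem_ball (hD hz)) (mem_ball_zero_iff.2 (hy z hz)) (h.eq_mul z (hD hz)) (hfix z hz)
  rw [norm_mul]
  exact mul_le_of_le_one_right (norm_nonneg z) (hΦ.norm_deriv_lt_one w hw).le

theorem norm_le_inv_of_mem (h : IsContractiveBranch Φ D κ Y) (hz : z ∈ D)
    (hc : 0 < c) (hκ : c ≤ 1 - κ z) : ‖(1 - z * deriv Φ (Y z))⁻¹‖ ≤ c⁻¹ := by
  rw [norm_inv]
  exact inv_anti₀ hc (hκ.trans (h.one_sub_le_norm hz))

end IsContractiveBranch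

theorem exists_isContractiveBranch_of_near_of_far {Φ ω : ℂ → ℂ} {D : Set ℂ} {κ r : ℂ → ℝ}
    {ε ρ : ℝ} (hω : ContinuousOn ω D) (hr : ContinuousOn r D) (hD : IsOpen D) (hε : 0 < ε)
    (hρ : ρ < 1) (hrpos : ∀ z ∈ D, ‖1 - z‖ < ε → 0 < r z)
    (hnear : ∀ z ∈ D, ‖1 - z‖ < ε → ∃ w ∈ closedBall (ω z) (r z), w = z * Φ w)
    (hnear_ball : ∀ z ∈ D, ‖1 - z‖ < ε → closedBall (ω z) (2 * r z) ⊆ ball 0 1)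
    (hnear_contr : ∀ z ∈ D, ‖1 - z‖ < ε →
      ∀ w ∈ closedBall (ω z) (2 * r z), ‖z * deriv Φ w‖ ≤ κ z)
    (hoverlap : ∀ z ∈ D, ε / 2 ≤ ‖1 - z‖ → ‖1 - z‖ < ε →
      closedBall (ω z) (r z) ⊆ closedBall 0 ρ)
    (hfar : ∀ z ∈ D, ε ≤ ‖1 - z‖ → ∃ w ∈ closedBall (0 : ℂ) ρ, w = z * Φ w)
    (hfar_contr : ∀ z ∈ D, ε ≤ ‖1 - z‖ → ∀ w ∈ closedBall (0 : ℂ) ρ, ‖z * deriv Φ w‖ ≤ κ z) :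
    ∃ Y, IsContractiveBranch Φ D κ Y ∧
      ∀ z ∈ D, ‖1 - z‖ < ε → Y z ∈ closedBall (ω z) (r z) := by
  have hexists (z : ℂ) (hz : z ∈ D) : ∃ w, w = z * Φ w ∧
      (‖1 - z‖ < ε → w ∈ closedBall (ω z) (r z)) ∧ (ε / 2 ≤ ‖1 - z‖ → w ∈ closedBall 0 ρ) := by
    rcases lt_or_ge ‖1 - z‖ ε with hzε | hzε
    · obtain ⟨w, hw, hfix⟩ := hnear z hz hzε
      exact ⟨w, hfix, fun _ => hw, fun hz2 => hoverlap z hz hz2 hzε hw⟩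
    · obtain ⟨w, hw, hfix⟩ := hfar z hz hzε
      exact ⟨w, hfix, fun hlt => absurd hzε hlt.not_ge, fun _ => hw⟩
  choose! Y hYfix hYnear hYfar using hexists
  refine ⟨Y, ⟨hYfix, fun z₀ hz₀ => ?_⟩, hYnear⟩
  have hmem := hD.mem_nhds hz₀
  have hdist : ContinuousAt (fun z : ℂ => ‖1 - z‖) z₀ := by fun_prop
  rcases lt_or_ge ‖1 - z₀‖ ε with hzε | hzε
  · refine ⟨closedBall (ω z₀) (2 * r z₀), hnear_ball z₀ hz₀ hzε, convex_closedBall _ _,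
      hnear_contr z₀ hz₀ hzε, ?_⟩
    have hshift : ContinuousAt (fun z => r z + dist (ω z) (ω z₀)) z₀ :=
      (hr.continuousAt hmem).add ((hω.continuousAt hmem).dist continuousAt_const)
    have hradius : r z₀ + dist (ω z₀) (ω z₀) < 2 * r z₀ := by
      rw [dist_self]
      linarith [hrpos z₀ hz₀ hzε]
    filter_upwards [hmem, hdist.eventually_lt_const hzε, hshift.eventually_lt_const hradius]
      with z hz hzε hle
    exact closedBall_subset_closedBall' hle.le (hYnear z hz hzε)
  · refine ⟨closedBall 0 ρ, closedBall_subset_ball hρ, convex_closedBall _ _,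
      hfar_contr z₀ hz₀ hzε, ?_⟩
    filter_upwards [hmem, hdist.eventually_const_lt ((half_lt_self hε).trans_le hzε)]
      with z hz hz2 using hYfar z hz hz2.le

namespace IsCriticalGF

variable {Φ y : ℂ → ℂ} {s δ M θ ε ρ₀ : ℝ} {D : Set ℂ}

theorem exists_forall_near (h : IsCriticalGF Φ s δ)
    (hω : Tendsto (sqrtApprox s) (𝓝[D] 1) (𝓝[Complex.stolzSet M] 1)) :
    ∃ ε > 0, ∀ z ∈ D, ‖1 - z‖ < ε → sqrtApprox s z ∈ Complex.stolzSet M ∧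
      (∃ w ∈ closedBall (sqrtApprox s z) (‖1 - sqrtApprox s z‖ / (4 * M)), w = z * Φ w) ∧
      ∀ w ∈ closedBall (sqrtApprox s z) (‖1 - sqrtApprox s z‖ / (2 * M)),
        ‖z * deriv Φ w‖ ≤ 1 - s / (64 * M) * ‖1 - sqrtApprox s z‖ := by
  have hnear := (hω.eventually self_mem_nhdsWithin).and
    ((hω.eventually h.eventually_exists_eq_mul).and (hω.eventually h.eventually_norm_mul_deriv_le))
  simp only [one_sub_mul_sq_sqrtApprox h.variance_pos] at hnear
  obtain ⟨ε, hε, hball⟩ := mem_nhdsWithin_iff.1 hnear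
  exact ⟨ε, hε, fun z hz hzε => hball ⟨mem_ball_iff_norm'.2 hzε, hz⟩⟩

theorem exists_forall_far (h : IsCriticalGF Φ s δ) (hyc : ContinuousOn y (closedBall 0 1))
    (hy1 : ∀ z ∈ closedBall (0 : ℂ) 1, z ≠ 1 → ‖y z‖ < 1)
    (hfix : ∀ z ∈ closedBall (0 : ℂ) 1, y z = z * Φ (y z)) (hε : 0 < ε) (hρ₀ : ρ₀ < 1) :
    ∃ ρ ∈ Set.Ioo ρ₀ 1, ∃ κ < 1, ∃ R ∈ Set.Ioo (1 : ℝ) 2, ∀ z ∈ ball (0 : ℂ) R,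
      (ε ≤ ‖1 - z‖ → ∃ w ∈ closedBall (0 : ℂ) ρ, w = z * Φ w) ∧
        ∀ w ∈ closedBall (0 : ℂ) ρ, ‖z * deriv Φ w‖ ≤ κ := by
  obtain ⟨ρ, hexists, hρ⟩ := ((h.eventually_eventually_exists_eq_mul hyc hy1 hfix hε).and
    (Ioo_mem_nhdsLT hρ₀)).exists
  obtain ⟨κ, hκ1, hκ⟩ := h.exists_eventually_norm_mul_deriv_le hρ.2
  obtain ⟨R, ⟨hR, hκR⟩, hR2⟩ :=
    ((hexists.and hκ).and (Ioo_mem_nhdsGT one_lt_two)).exists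
  exact ⟨ρ, hρ, κ, hκ1, R, hR2, fun z hz => ⟨hR z hz, hκR z hz⟩⟩

theorem exists_isContractiveBranch (h : IsCriticalGF Φ s δ)
    (hyc : ContinuousOn y (closedBall 0 1))
    (hy1 : ∀ z ∈ closedBall (0 : ℂ) 1, z ≠ 1 → ‖y z‖ < 1)
    (hfix : ∀ z ∈ closedBall (0 : ℂ) 1, y z = z * Φ (y z)) (hθ : θ ∈ Set.Ioo 0 Real.pi) :
    ∃ R > 1, ∃ M > 1, ∃ κ < 1, ∃ Y,
      Tendsto (sqrtApprox s) (𝓝[deltaDom R θ] 1) (𝓝[Complex.stolzSet M] 1) ∧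
      (∀ᶠ z in 𝓝[deltaDom R θ] 1,
        Y z ∈ closedBall (sqrtApprox s z) (‖1 - sqrtApprox s z‖ / (2 * M))) ∧
      IsContractiveBranch Φ (deltaDom R θ)
        (fun z => max (1 - s / (64 * M) * ‖1 - sqrtApprox s z‖) κ) Y := by
  have hs := h.variance_pos
  have hθ' : θ ∈ Set.Icc 0 Real.pi := Set.Ioo_subset_Icc_self hθ
  obtain ⟨M, hM, hω⟩ := exists_tendsto_sqrtApprox_stolzSet hs hθ
  have hM0 : 0 < M := one_pos.trans hM
  obtain ⟨ε, hε, hnear⟩ := h.exists_forall_near (hω 2)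
  obtain ⟨ρ, hρ, κ, hκ, R, hR, hfar⟩ := h.exists_forall_far hyc hy1 hfix hε
    (sub_lt_self 1 (show 0 < √2 / √s * (ε / 2) ^ (2⁻¹ : ℝ) / (8 * M) by positivity))
  have hnearR (z : ℂ) (hz : z ∈ deltaDom R θ) := hnear z ⟨hz.1.trans hR.2, hz.2⟩
  have hfarR (z : ℂ) (hz : z ∈ deltaDom R θ) := hfar z (mem_ball_zero_iff.2 hz.1)
  have hcont : ContinuousOn (sqrtApprox s) (deltaDom R θ) := continuousOn_sqrtApprox hθ'
  have hdouble (x : ℝ) : 2 * (x / (4 * M)) = x / (2 * M) := by field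
  have hradius (z : ℂ) : ‖1 - sqrtApprox s z‖ / (4 * M) ≤ ‖1 - sqrtApprox s z‖ / (2 * M) := by
    gcongr
    norm_num
  have hoverlap (z : ℂ) (hz : z ∈ deltaDom R θ) (hz2 : ε / 2 ≤ ‖1 - z‖) (hzε : ‖1 - z‖ < ε) :
      closedBall (sqrtApprox s z) (‖1 - sqrtApprox s z‖ / (4 * M)) ⊆ closedBall 0 ρ := by
    intro w hw
    refine mem_closedBall_zero_iff.2 ((norm_le_one_sub_of_mem_closedBall (hnearR z hz hzε).1
      (closedBall_subset_closedBall (hradius z) hw)).trans (le_trans ?_ hρ.1.le))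
    rw [norm_one_sub_sqrtApprox]
    gcongr
  obtain ⟨Y, hY, hYnear⟩ := exists_isContractiveBranch_of_near_of_far
    (κ := fun z => max (1 - s / (64 * M) * ‖1 - sqrtApprox s z‖) κ)
    (r := fun z => ‖1 - sqrtApprox s z‖ / (4 * M))
    hcont (by fun_prop) (isOpen_deltaDom hθ') hε hρ.2
    (fun z hz hzε =>
      div_pos (norm_one_sub_pos_of_mem_stolzSet (hnearR z hz hzε).1) (mul_pos four_pos hM0))
    (fun z hz hzε => (hnearR z hz hzε).2.1)
    (fun z hz hzε w hw => mem_ball_zero_iff.2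
      (closedBall_subset_stolzSet (hnearR z hz hzε).1 (by rwa [← hdouble])).1)
    (fun z hz hzε w hw =>
      ((hnearR z hz hzε).2.2 w (by rwa [← hdouble])).trans (le_max_left _ _))
    hoverlap (fun z hz => (hfarR z hz).1)
    (fun z hz _ w hw => ((hfarR z hz).2 w hw).trans (le_max_right _ _))
  refine ⟨R, hR.1, M, hM, κ, hκ, Y, hω R, ?_, hY⟩
  filter_upwards [self_mem_nhdsWithin, eventually_norm_one_sub_lt hε] with z hz hzε
  exact closedBall_subset_closedBall (hradius z) (hYnear z hz hzε)

end IsCriticalGF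

theorem isBigO_principal_norm_one_sub_rpow {S : Set ℂ} {f : ℂ → ℂ} {B β : ℝ}
    (hS : ∀ z ∈ S, ‖1 - z‖ ≤ B) (hfar : ∀ ε > 0, ∃ C, ∀ z ∈ S, ε ≤ ‖1 - z‖ → ‖f z‖ ≤ C)
    (hnear : f =O[𝓝[S] 1] fun z => ‖1 - z‖ ^ β) : f =O[𝓟 S] fun z => ‖1 - z‖ ^ β := by
  obtain ⟨C, hC⟩ := hnear.bound
  obtain ⟨ε, hε, hball⟩ := mem_nhdsWithin_iff.1 hC
  obtain ⟨C', hC'⟩ := hfar ε hε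
  have hinside : f =O[𝓟 (ball 1 ε ∩ S)] fun z => ‖1 - z‖ ^ β :=
    isBigO_principal.2 ⟨C, fun z hz => hball hz⟩
  have houtside : f =O[𝓟 (S ∩ {z | ε ≤ ‖1 - z‖})] fun z => ‖1 - z‖ ^ β := by
    have hpow : (fun _ => (1 : ℝ)) =O[𝓟 (Set.Icc ε B)] fun t : ℝ => t ^ β :=
      ContinuousOn.isBigO_rev_principal
        (fun t ht => (Real.continuousAt_rpow_const t β
          (Or.inl (hε.trans_le ht.1).ne')).continuousWithinAt) isCompact_Icc
        (fun t ht => (Real.rpow_pos_of_pos (hε.trans_le ht.1) β).ne') 1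
    refine IsBigO.trans (isBigO_principal.2 ⟨C', fun z hz => ?_⟩) (hpow.comp_tendsto
      (tendsto_principal_principal.2 fun z hz => ⟨hz.2, hS z hz.1⟩))
    simpa using hC' z hz.1 hz.2
  refine (hinside.sup houtside).mono ?_
  rw [sup_principal, principal_mono]
  intro z hz
  rcases lt_or_ge ‖1 - z‖ ε with hzε | hzε
  · exact Or.inl ⟨mem_ball_iff_norm'.2 hzε, hz⟩
  · exact Or.inr ⟨hz, hzε⟩

section Transfer

variable {f : ℂ → ℂ} {R θ s B β : ℝ} {z : ℂ}

theorem norm_one_sub_le_of_mem_deltaDom (hz : z ∈ deltaDom R θ) : ‖1 - z‖ ≤ 1 + R :=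
  (norm_sub_le 1 z).trans (by rw [norm_one]; linarith [hz.1])

theorem isBigO_norm_one_sub_sqrtApprox_rpow {l : Filter ℂ} :
    (fun z => ‖1 - sqrtApprox s z‖ ^ β) =O[l] fun z => ‖1 - z‖ ^ (β / 2) := by
  simp only [norm_one_sub_sqrtApprox_rpow]
  exact (isBigO_refl _ l).const_mul_left _

theorem le_norm_one_sub_sqrtApprox {ε : ℝ} (hε : 0 ≤ ε) (hz : ε ≤ ‖1 - z‖) :
    √2 / √s * ε ^ (2⁻¹ : ℝ) ≤ ‖1 - sqrtApprox s z‖ := by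
  rw [norm_one_sub_sqrtApprox]
  gcongr

theorem isBigO_principal_sub_sqrtApprox {S : Set ℂ} (hS : ∀ z ∈ S, ‖1 - z‖ ≤ B)
    (hf1 : ∀ z ∈ S, ‖f z‖ ≤ 1)
    (hf : (fun z => f z - sqrtApprox s z) =O[𝓝[S] 1] fun z => ‖1 - sqrtApprox s z‖ ^ β) :
    (fun z => f z - sqrtApprox s z) =O[𝓟 S] fun z => ‖1 - z‖ ^ (β / 2) := by
  refine isBigO_principal_norm_one_sub_rpow hS (fun ε _ => ?_)
    (hf.trans isBigO_norm_one_sub_sqrtApprox_rpow)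
  refine ⟨1 + (1 + √2 / √s * B ^ (2⁻¹ : ℝ)), fun z hz _ => ?_⟩
  have hω : ‖1 - sqrtApprox s z‖ ≤ √2 / √s * B ^ (2⁻¹ : ℝ) := by
    rw [norm_one_sub_sqrtApprox]
    gcongr
    exact hS z hz
  have hω1 := norm_le_norm_add_norm_sub (1 : ℂ) (sqrtApprox s z)
  rw [norm_one] at hω1
  linarith [norm_sub_le (f z) (sqrtApprox s z), hf1 z hz]

theorem isBigO_principal_sub_cpow_neg {S : Set ℂ} (hs : 0 < s) (hS : ∀ z ∈ S, ‖1 - z‖ ≤ B)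
    (hfar : ∀ ε > 0, ∃ C, ∀ z ∈ S, ε ≤ ‖1 - z‖ → ‖f z‖ ≤ C)
    (hf : (fun z => f z - (s * (1 - sqrtApprox s z))⁻¹) =O[𝓝[S] 1]
      fun z => ‖1 - sqrtApprox s z‖ ^ β) :
    (fun z => f z - (((√2)⁻¹ / √s : ℝ) : ℂ) * (1 - z) ^ (-2⁻¹ : ℂ)) =O[𝓟 S]
      fun z => ‖1 - z‖ ^ (β / 2) := by
  simp only [← inv_mul_one_sub_sqrtApprox]
  refine isBigO_principal_norm_one_sub_rpow hS (fun ε hε => ?_)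
    (hf.trans isBigO_norm_one_sub_sqrtApprox_rpow)
  obtain ⟨C, hC⟩ := hfar ε hε
  refine ⟨C + (s * (√2 / √s * ε ^ (2⁻¹ : ℝ)))⁻¹, fun z hz hεz =>
    (norm_sub_le _ _).trans (add_le_add (hC z hz hεz) ?_)⟩
  rw [norm_inv, norm_mul, Complex.norm_of_nonneg hs.le]
  gcongr
  exact le_norm_one_sub_sqrtApprox hε.le hεz

end Transfer

namespace IsContractiveBranch

variable {Φ Y : ℂ → ℂ} {D : Set ℂ} {s δ c κ ε : ℝ} {z : ℂ}

theorem exists_forall_norm_inv_le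
    (h : IsContractiveBranch Φ D (fun z => max (1 - c * ‖1 - sqrtApprox s z‖) κ) Y)
    (hs : 0 < s) (hc : 0 < c) (hκ : κ < 1) (hε : 0 < ε) :
    ∃ C, ∀ z ∈ D, ε ≤ ‖1 - z‖ → ‖(1 - z * deriv Φ (Y z))⁻¹‖ ≤ C := by
  refine ⟨(min (c * (√2 / √s * ε ^ (2⁻¹ : ℝ))) (1 - κ))⁻¹, fun z hz hεz =>
    h.norm_le_inv_of_mem hz (lt_min (by positivity) (sub_pos.2 hκ)) ?_⟩
  have hlow := mul_le_mul_of_nonneg_left (le_norm_one_sub_sqrtApprox (s := s) hε.le hεz) hc.le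
  rw [← min_sub_sub_left, sub_sub_cancel]
  exact min_le_min_right _ hlow

theorem hasDerivAt_of_isCriticalGF
    (h : IsContractiveBranch Φ D (fun z => max (1 - c * ‖1 - sqrtApprox s z‖) κ) Y)
    (hΦ : IsCriticalGF Φ s δ) (hD : IsOpen D) (hc : 0 < c) (hκ : κ < 1) (hz : z ∈ D)
    (hz1 : z ≠ 1) : HasDerivAt Y (Φ (Y z) / (1 - z * deriv Φ (Y z))) z := by
  have hpos : 0 < ‖1 - sqrtApprox s z‖ := (by
    have hs := hΦ.variance_pos
    have hz0 := norm_pos_iff.2 (sub_ne_zero.2 hz1.symm)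
    positivity : 0 < √2 / √s * ‖1 - z‖ ^ (2⁻¹ : ℝ)).trans_le
      (le_norm_one_sub_sqrtApprox (norm_nonneg _) le_rfl)
  exact h.hasDerivAt hD hΦ.differentiableOn hΦ.norm_le_one hz
    (max_lt (sub_lt_self 1 (mul_pos hc hpos)) hκ)

end IsContractiveBranch

theorem mul_div_div_self_of_eq_mul {Φ : ℂ → ℂ} {z w d : ℂ} (hw : w = z * Φ w) (hw0 : w ≠ 0) :
    z * (Φ w / d) / w = d⁻¹ := by
  rw [mul_div_assoc', ← hw, div_div_cancel_left' hw0]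

theorem norm_mul_div_div_le {Φ : ℂ → ℂ} {z w d : ℂ} (hw : w = z * Φ w) :
    ‖z * (Φ w / d) / w‖ ≤ ‖d⁻¹‖ := by
  rcases eq_or_ne w 0 with hw0 | hw0
  · simp [hw0]
  · rw [mul_div_div_self_of_eq_mul hw hw0]

theorem IsCriticalGF.exists_deltaDom_extension {Φ y : ℂ → ℂ} {s δ θ : ℝ} (h : IsCriticalGF Φ s δ)
    (hyc : ContinuousOn y (closedBall 0 1))
    (hy1 : ∀ z ∈ closedBall (0 : ℂ) 1, z ≠ 1 → ‖y z‖ < 1)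
    (hfix : ∀ z ∈ closedBall (0 : ℂ) 1, y z = z * Φ (y z)) (hθ : θ ∈ Set.Ioc 0 (Real.pi / 2)) :
    ∃ R > 1, ∃ Y, Set.EqOn Y y (ball 0 1) ∧ DifferentiableOn ℂ Y (deltaDom R θ) ∧
      ((fun z => Y z - sqrtApprox s z) =O[𝓟 (deltaDom R θ)] fun z => ‖1 - z‖ ^ ((1 + δ) / 2)) ∧
      ((fun z => deriv Y z - (((√2)⁻¹ / √s : ℝ) : ℂ) * (1 - z) ^ (-2⁻¹ : ℂ))
        =O[𝓟 (deltaDom R θ)] fun z => ‖1 - z‖ ^ ((δ - 1) / 2)) ∧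
      ((fun z => z * deriv Y z / Y z - (((√2)⁻¹ / √s : ℝ) : ℂ) * (1 - z) ^ (-2⁻¹ : ℂ))
        =O[𝓟 (deltaDom R θ)] fun z => ‖1 - z‖ ^ ((δ - 1) / 2)) := by
  have hs := h.variance_pos
  have hθπ : θ ∈ Set.Ioo 0 Real.pi := ⟨hθ.1, hθ.2.trans_lt (half_lt_self Real.pi_pos)⟩
  have hθ' : θ ∈ Set.Icc 0 Real.pi := Set.Ioo_subset_Icc_self hθπ
  obtain ⟨R, hR, M, hM, κ, hκ, Y, hω, hYω, hY⟩ := h.exists_isContractiveBranch hyc hy1 hfix hθπ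
  have hB (z : ℂ) (hz : z ∈ deltaDom R θ) := norm_one_sub_le_of_mem_deltaDom hz
  have hc : 0 < s / (64 * M) := div_pos hs (by linarith)
  have hderiv (z : ℂ) (hz : z ∈ deltaDom R θ) :=
    hY.hasDerivAt_of_isCriticalGF h (isOpen_deltaDom hθ') hc hκ hz hz.2.1
  have hfar {f : ℂ → ℂ} (hf : ∀ z ∈ deltaDom R θ, ‖f z‖ ≤ ‖(1 - z * deriv Φ (Y z))⁻¹‖) (ε : ℝ)
      (hε : ε > 0) : ∃ C, ∀ z ∈ deltaDom R θ, ε ≤ ‖1 - z‖ → ‖f z‖ ≤ C :=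
    (hY.exists_forall_norm_inv_le hs hc hκ hε).imp fun C hC z hz hεz =>
      (hf z hz).trans (hC z hz hεz)
  have hYfix : ∀ᶠ z in 𝓝[deltaDom R θ] 1,
      Y z = (1 - s / 2 * (1 - sqrtApprox s z) ^ 2) * Φ (Y z) := by
    filter_upwards [self_mem_nhdsWithin] with z hz
    rw [one_sub_mul_sq_sqrtApprox hs, ← hY.eq_mul z hz]
  have hYne : ∀ᶠ z in 𝓝[deltaDom R θ] 1, Y z ≠ 0 :=
    (tendsto_nhdsWithin_iff.1 (tendsto_stolzSet_of_mem_closedBall hω hYω)).1.eventually_ne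
      one_ne_zero
  have hvalue := h.fixedPoint_sub_isBigO hω hYω hYfix
  have hslope := h.fixedPoint_deriv_sub_isBigO hω hYω hYfix
  have hlogslope := h.inv_one_sub_mul_deriv_sub_isBigO hω hYω hYfix
  simp only [one_sub_mul_sq_sqrtApprox hs] at hslope hlogslope
  refine ⟨R, hR, Y, hY.eqOn_ball h (ball_subset_deltaDom hR.le ⟨hθ.1.le, hθ.2⟩) ?_ ?_,
    fun z hz => (hderiv z hz).differentiableAt.differentiableWithinAt,
    isBigO_principal_sub_sqrtApprox hB (fun z hz => (mem_ball_zero_iff.1 (hY.mem_ball hz)).le)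
      hvalue,
    isBigO_principal_sub_cpow_neg hs hB (hfar fun z hz => ?_) (hslope.congr' ?_ .rfl),
    isBigO_principal_sub_cpow_neg hs hB (hfar fun z hz => ?_) (hlogslope.congr' ?_ .rfl)⟩
  · exact fun z hz => hy1 z (ball_subset_closedBall hz) fun h1 => by simp [h1] at hz
  · exact fun z hz => hfix z (ball_subset_closedBall hz)
  · rw [(hderiv z hz).deriv, div_eq_mul_inv, norm_mul]
    exact mul_le_of_le_one_left (norm_nonneg _) (h.norm_le_one _ (hY.mem_ball hz))
  · filter_upwards [self_mem_nhdsWithin] with z hz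
    rw [(hderiv z hz).deriv]
  · rw [(hderiv z hz).deriv]
    exact norm_mul_div_div_le (hY.eq_mul z hz)
  · filter_upwards [self_mem_nhdsWithin, hYne] with z hz hz0
    rw [(hderiv z hz).deriv, mul_div_div_self_of_eq_mul (hY.eq_mul z hz) hz0]

theorem isCriticalGF_pgf {p : ℕ → ℝ} {s δ : ℝ} (hp : ∀ k, 0 ≤ p k) (hP : HasSum p 1)
    (hmean : HasSum (fun k : ℕ => k * p k) 1)
    (hvar : HasSum (fun k : ℕ => (k : ℝ) * ((k : ℝ) - 1) * p k) s) (hs : 0 < s) (hδ0 : 0 < δ)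
    (hδ1 : δ ≤ 1) (hmom : Summable fun k : ℕ => (k : ℝ) ^ ((2 : ℝ) + δ) * p k) :
    IsCriticalGF (pgf p) s δ := by
  obtain ⟨j, hj, hpj⟩ := exists_two_le_coeff_ne_zero (hvar.tsum_eq.trans_ne hs.ne')
  refine ⟨hs, hδ0, hδ1, differentiableOn_pgf hp hP.summable,
    fun w hw => norm_pgf_le_one hp hP (mem_ball_zero_iff.1 hw).le,
    fun w hw => norm_deriv_pgf_lt_one hp hP.summable hmean hj hpj (mem_ball_zero_iff.1 hw),
    IsBigO.of_bound (2 * ∑' k : ℕ, (k : ℝ) ^ ((2 : ℝ) + δ) * p k) ?_⟩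
  filter_upwards [self_mem_nhdsWithin] with w hw
  rw [Real.norm_of_nonneg (by positivity)]
  exact norm_pgf_sub_quadratic_le hp hP hmean hvar hδ0.le hδ1 hmom.hasSum
    (mem_ball_zero_iff.1 hw).le

theorem hasSum_of_tsum_eq {ι α : Type*} [AddCommMonoid α] [TopologicalSpace α] {f : ι → α} {a : α}
    (h : ∑' i, f i = a) (ha : a ≠ 0) : HasSum f a := by
  have hf : Summable f := by
    by_contra hf
    exact ha (h.symm.trans (tsum_eq_zero_of_not_summable hf))
  exact h ▸ hf.hasSum

theorem exists_common_bound {S : Set ℂ} {f g k : ℂ → ℂ} {a b : ℝ}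
    (hf : f =O[𝓟 S] fun z => ‖1 - z‖ ^ a) (hg : g =O[𝓟 S] fun z => ‖1 - z‖ ^ b)
    (hk : k =O[𝓟 S] fun z => ‖1 - z‖ ^ b) :
    ∃ C : ℝ, ∀ z ∈ S, ‖f z‖ ≤ C * ‖1 - z‖ ^ a ∧ ‖g z‖ ≤ C * ‖1 - z‖ ^ b ∧
      ‖k z‖ ≤ C * ‖1 - z‖ ^ b := by
  obtain ⟨C, hC⟩ := ((isBigO_iff_eventually.1 hf).and ((isBigO_iff_eventually.1 hg).and
    (isBigO_iff_eventually.1 hk))).exists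
  have hnorm (t : ℝ) (z : ℂ) : ‖‖1 - z‖ ^ t‖ = ‖1 - z‖ ^ t := Real.norm_of_nonneg (by positivity)
  simp only [eventually_principal, hnorm] at hC
  exact ⟨C, fun z hz => ⟨hC.1 z hz, hC.2.1 z hz, hC.2.2 z hz⟩⟩

/-- Under the hypotheses of Lemma 2.4 (`Lgdy`), the tree-size generating
function extends analytically to a Δ-domain, where
`Y(z) = 1 − √2 σ⁻¹ (1−z)^{1/2} + O(|1−z|^{(1+δ)/2})`,
`Y'(z) = 2^{-1/2} σ⁻¹ (1−z)^{-1/2} + O(|1−z|^{(δ−1)/2})`, and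
`z·Y'(z)/Y(z) = 2^{-1/2} σ⁻¹ (1−z)^{-1/2} + O(|1−z|^{(δ−1)/2})`. -/
theorem stmt3
    (p : ℕ → ℝ) (hp : ∀ k, 0 ≤ p k)
    (hpsum : ∑' k, p k = 1)
    (hcrit : ∑' k : ℕ, (k : ℝ) * p k = 1)
    (hspan : ∀ d : ℕ, (∀ k, p k ≠ 0 → d ∣ k) → d = 1)
    (hσpos : 0 < ∑' k : ℕ, (k : ℝ) * ((k : ℝ) - 1) * p k)
    (δ : ℝ) (hδ0 : 0 < δ) (hδ1 : δ ≤ 1)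
    (hmom : Summable (fun k : ℕ => (k : ℝ) ^ ((2:ℝ) + δ) * p k))
    (q : ℕ → ℝ) (hq0 : q 0 = 0) (hqnn : ∀ n, 0 ≤ q n)
    (hqsum : ∑' n, q n = 1)
    (hfix : ∀ z ∈ Set.Icc (0:ℝ) 1,
      (∑' n, q n * z ^ n) = z * ∑' k, p k * (∑' n, q n * z ^ n) ^ k) :
    ∃ (R θ C : ℝ) (Y : ℂ → ℂ), 1 < R ∧ θ ∈ Set.Ioo 0 (Real.pi / 2) ∧
      (∀ z : ℂ, ‖z‖ < 1 → Y z = ∑' n : ℕ, (q n : ℂ) * z ^ n) ∧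
      DifferentiableOn ℂ Y (deltaDom R θ) ∧
      (∀ z ∈ deltaDom R θ,
        ‖Y z - (1 - ((Real.sqrt 2 / Real.sqrt (∑' k : ℕ, (k : ℝ) * ((k : ℝ) - 1) * p k) : ℝ) : ℂ)
            * (1 - z) ^ ((1:ℂ)/2))‖ ≤ C * ‖1 - z‖ ^ ((1 + δ)/2) ∧
        ‖deriv Y z - (((Real.sqrt 2)⁻¹ / Real.sqrt (∑' k : ℕ, (k : ℝ) * ((k : ℝ) - 1) * p k) : ℝ) : ℂ)
            * (1 - z) ^ (-(1:ℂ)/2)‖ ≤ C * ‖1 - z‖ ^ ((δ - 1)/2) ∧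
        ‖z * deriv Y z / Y z -
            (((Real.sqrt 2)⁻¹ / Real.sqrt (∑' k : ℕ, (k : ℝ) * ((k : ℝ) - 1) * p k) : ℝ) : ℂ)
            * (1 - z) ^ (-(1:ℂ)/2)‖ ≤ C * ‖1 - z‖ ^ ((δ - 1)/2)) := by
  have hP : HasSum p 1 := hasSum_of_tsum_eq hpsum one_ne_zero
  have hQ : HasSum q 1 := hasSum_of_tsum_eq hqsum one_ne_zero
  have hmean : HasSum (fun k : ℕ => k * p k) 1 := hasSum_of_tsum_eq hcrit one_ne_zero
  obtain ⟨j, hj, hpj⟩ := exists_two_le_coeff_ne_zero hσpos.ne'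
  have hfix_real (x : ℝ) (hx : x ∈ Set.Ioo 0 1) : pgf q x = x * pgf p (pgf q x) := by
    simpa only [pgf_ofReal, ← Complex.ofReal_mul] using
      congrArg Complex.ofReal (hfix x (Set.Ioo_subset_Icc_self hx))
  have hfix_disc (z : ℂ) (hz : z ∈ closedBall 0 1) : pgf q z = z * pgf p (pgf q z) :=
    pgf_eq_mul_pgf hp hP.summable hqnn hQ hq0 hfix_real (mem_closedBall_zero_iff.1 hz)
  obtain ⟨R, hR, Y, hYq, hYd, hvalue, hslope, hlogslope⟩ :=
    (isCriticalGF_pgf hp hP hmean (hasSum_of_tsum_eq rfl hσpos.ne') hσpos hδ0 hδ1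
      hmom).exists_deltaDom_extension (θ := Real.pi / 4) (continuousOn_pgf hqnn hQ.summable)
      (fun z hz => norm_pgf_lt_one hp hP (coeff_zero_ne_zero hp hP hmean hj hpj) hspan hqnn hQ
        (hfix_disc z hz) (mem_closedBall_zero_iff.1 hz)) hfix_disc
      ⟨by positivity, by linarith [Real.pi_pos]⟩
  obtain ⟨C, hC⟩ := exists_common_bound hvalue hslope hlogslope
  refine ⟨R, Real.pi / 4, C, Y, hR, ⟨by positivity, by linarith [Real.pi_pos]⟩,
    fun z hz => hYq (mem_ball_zero_iff.2 hz), hYd, fun z hz => ?_⟩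
  simpa only [sqrtApprox, neg_div, one_div] using hC z hz
end
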